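/- Let n ≥ 1, let b ≥ 1 be an integer, and let α ∈ (1/2, 1] satisfy 2α − 1 < n and nb > (2α−1)(b+1). Let p(·) ∈ P^log(ℝ^n) with p⁻ > b+1 and (2α−1)·p⁺ < n(b+1). Then there exists C > 0 such that for every measurable u : (0,∞)×ℝ^n → ℝ: N_{p(·), nb/(2α−1)}( (t,x) ↦ Σ_{j=1}^n ∫_0^t (∂_j 𝔤_{t−s}^α ∗ (|u|^b u)(s,·))(x) ds ) ≤ C · ( N_{p(·), nb/(2α−1)}(u) )^{b+1}. -/

import Mathlib

open MeasureTheory Set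
open scoped ENNReal FourierTransform

noncomputable section

/-- Euclidean space `ℝ^n`. -/
abbrev Rn (n : ℕ) := EuclideanSpace ℝ (Fin n)

/-- Luxemburg norm of an `ℝ≥0∞`-valued function for a variable exponent `p`. -/
def luxNorm {Ω : Type*} [MeasurableSpace Ω] (μ : Measure Ω) (p : Ω → ℝ) (f : Ω → ℝ≥0∞) : ℝ≥0∞ :=
  sInf {lam : ℝ≥0∞ | 0 < lam ∧ ∫⁻ x, (f x / lam) ^ (p x) ∂μ ≤ 1}

/-- Luxemburg norm `‖f‖_{L^{p(·)}}` of a real-valued function. -/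
def luxNormR {Ω : Type*} [MeasurableSpace Ω] (μ : Measure Ω) (p : Ω → ℝ) (f : Ω → ℝ) : ℝ≥0∞ :=
  luxNorm μ p (fun x => ENNReal.ofReal |f x|)

/-- `p(·) ∈ P^log(Ω)`: measurable, with values in `[1,∞)` on `Ω`, locally log-Hölder
continuous on `Ω`, and satisfying the log-Hölder decay condition on `Ω`. -/
def IsPLog {E : Type*} [NormedAddCommGroup E] [MeasurableSpace E] (Ω : Set E) (p : E → ℝ) : Prop :=
  Measurable p ∧ (∀ x ∈ Ω, 1 ≤ p x) ∧
  ∃ C₁ > (0:ℝ), ∃ C₂ > (0:ℝ), ∃ pinf : ℝ,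
    (∀ x ∈ Ω, ∀ y ∈ Ω, x ≠ y →
      |1 / p x - 1 / p y| ≤ C₁ / Real.log (Real.exp 1 + 1 / ‖x - y‖)) ∧
    (∀ x ∈ Ω, |1 / p x - 1 / pinf| ≤ C₂ / Real.log (Real.exp 1 + ‖x‖))

/-- The fractional heat kernel `𝔤_t^α` on `ℝ^n`: the inverse Fourier transform of
`ξ ↦ exp (-t‖ξ‖^{2α})` (it is real-valued; we take the real part). -/
def gKer (n : ℕ) (α t : ℝ) (x : Rn n) : ℝ :=
  (𝓕⁻ (fun ξ : Rn n => (Real.exp (-t * ‖ξ‖ ^ (2 * α)) : ℂ)) x).re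

/-- Convolution on `ℝ^n`. -/
def conv (n : ℕ) (g f : Rn n → ℝ) (x : Rn n) : ℝ := ∫ y, g (x - y) * f y

/-- The partial derivative `∂_j 𝔤_t^α`. -/
def dKer (n : ℕ) (α t : ℝ) (j : Fin n) (z : Rn n) : ℝ :=
  fderiv ℝ (gKer n α t) z (EuclideanSpace.single j 1)

/-- `x ↦ ess sup_{t>0} |u(t,x)|`, as an `ℝ≥0∞`-valued function. -/
def timeSup (n : ℕ) (u : ℝ → Rn n → ℝ) (x : Rn n) : ℝ≥0∞ :=
  essSup (fun t => ENNReal.ofReal |u t x|) (volume.restrict (Ioi (0:ℝ)))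

/-- Mixed norm `‖f‖_{𝓛^{p(·)}_r} = max {‖f‖_{L^{p(·)}}, ‖f‖_{L^r}}`. -/
def mixedNorm (n : ℕ) (p : Rn n → ℝ) (r : ℝ) (f : Rn n → ℝ) : ℝ≥0∞ :=
  max (luxNormR volume p f) (luxNormR volume (fun _ => r) f)

/-- `N_{p(·),r}(u) = ‖x ↦ ess sup_{t>0}|u(t,x)|‖_{𝓛^{p(·)}_r}`. -/
def mixedN (n : ℕ) (p : Rn n → ℝ) (r : ℝ) (u : ℝ → Rn n → ℝ) : ℝ≥0∞ :=
  max (luxNorm volume p (timeSup n u)) (luxNorm volume (fun _ => r) (timeSup n u))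

/-!
At `z`, the gradient of the Fourier transform of `ξ ↦ f (‖ξ‖ ^ 2)` is dominated by the integral of
`f` against the density `‖z‖ l ^ (n / 2) exp (-π² ‖z‖² l)`. For exponentials `f` this is an estimate
for Gaussians, and it passes to `f l = exp (-t l ^ α)` because, for `α ≤ 1`, this is a limit of
positive combinations of exponentials. Integrating the resulting bound on the gradient of the
fractional heat kernel over all times gives a multiple of the Riesz kernel of order `γ = 2α - 1`, so
the time supremum of the nonlinear term is at most `A I_γ (w ^ (b + 1))`, where `w` is the time
supremum of `u`.

When `w` has norm at most one in `L^r`, `r = n b / γ`, Hedberg's splitting of the potential at the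
optimal radius gives `I_γ (w ^ (b + 1)) ≤ K (M (w ^ (b + 1))) ^ (1 / (b + 1))`, with `M` the maximal
function. Since `M` is bounded on `L^{p(·) / (b + 1)}` and on `L^{r / (b + 1)}`, this settles the
normalised case, and homogeneity gives the rest.
-/

open Filter Topology

/-! ### Subordination -/

section PowerSeries

lemma neg_one_pow_mul_choose_nonpos {α : ℝ} (h0 : 0 < α) (h1 : α ≤ 1) (k : ℕ) :
    (-1) ^ (k + 1) * Ring.choose α (k + 1) ≤ 0 := by
  induction k with
  | zero => simp [h0.le]
  | succ k ih =>
    have hsucc : Ring.choose α (k + 1 + 1)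
        = Ring.choose α (k + 1) * ((α - (k + 1)) / (k + 2)) := by
      rw [Ring.choose_eq_smul, Ring.choose_eq_smul, descPochhammer_succ_right,
        Polynomial.smeval_mul, Nat.factorial_succ (k + 1)]
      simp [Polynomial.smeval_sub, Polynomial.smeval_X, Polynomial.smeval_natCast,
        Polynomial.smeval_add, Polynomial.smeval_one]
      field_simp
      ring
    have hratio : 0 ≤ -((α - (k + 1)) / ((k : ℝ) + 2)) := by
      rw [← neg_div]
      have : (0 : ℝ) ≤ k := k.cast_nonneg
      apply div_nonneg <;> linarith
    rw [hsucc, pow_succ]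
    nlinarith [mul_nonneg (neg_nonneg.2 ih) hratio]

lemma exists_nonneg_hasSum_one_sub_one_sub_rpow {α : ℝ} (h0 : 0 < α) (h1 : α ≤ 1) :
    ∃ c : ℕ → ℝ, (∀ k, 0 ≤ c k) ∧
      ∀ z : ℝ, |z| < 1 → HasSum (fun k => c k * z ^ k) (1 - (1 - z) ^ α) := by
  refine ⟨fun k => (if k = 0 then 1 else 0) - (-1) ^ k * Ring.choose α k, fun k => ?_,
    fun z hz => ?_⟩
  · rcases k with _ | k
    · simp
    · simpa using neg_one_pow_mul_choose_nonpos h0 h1 k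
  · have hbinom := (Real.one_add_rpow_hasFPowerSeriesOnBall_zero (a := α)).hasSum (y := -z)
      (by simpa [edist_eq_enorm_sub, ← ofReal_norm] using hz)
    have hone : HasSum (fun k : ℕ => (if k = 0 then (1 : ℝ) else 0)) 1 := by
      simpa using hasSum_ite_eq (0 : ℕ) (1 : ℝ)
    convert! hone.sub hbinom using 1
    · ext k
      rw [binomialSeries_apply]
      rcases k with _ | k
      · simp
      · simp [List.ofFn_const, neg_pow z]
        ring
    · simp [sub_eq_add_neg]

end PowerSeries

section Subordination

variable {Ω F : Type*} [MeasurableSpace Ω] [NormedAddCommGroup F] [NormedSpace ℝ F]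
  {μ : Measure Ω} {φ : Ω → F} {N : Ω → ℝ} {ψ f : ℝ → ℝ}

/-- Domination of the vector measure `N_*(φ μ)` by the measure `ψ(l) dl` on `(0, ∞)`, tested
against the single function `f`. -/
def LaplaceLE (μ : Measure Ω) (φ : Ω → F) (N : Ω → ℝ) (ψ f : ℝ → ℝ) : Prop :=
  ‖∫ ξ, f (N ξ) • φ ξ ∂μ‖ ≤ ∫ l in Ioi (0 : ℝ), ψ l * f l

/-- The vector measure `N_*(φ μ)` is dominated by `ψ(l) dl` when tested against all exponentials
`l ↦ exp (-s l)`, `s ≥ 0`. Being a statement about these test functions only, this is weaker than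
domination of measures. -/
structure ExpDominated (μ : Measure Ω) (φ : Ω → F) (N : Ω → ℝ) (ψ : ℝ → ℝ) : Prop where
  integrable : Integrable φ μ
  measurable : Measurable N
  pos : ∀ᵐ ξ ∂μ, 0 < N ξ
  integrableOn : IntegrableOn ψ (Ioi 0)
  laplaceLE_exp : ∀ s ≥ 0, LaplaceLE μ φ N ψ (fun l => Real.exp (-s * l))

namespace LaplaceLE

lemma const_mul (h : LaplaceLE μ φ N ψ f) {c : ℝ} (hc : 0 ≤ c) :
    LaplaceLE μ φ N ψ (fun l => c * f l) := by
  have hright : ∫ l in Ioi (0 : ℝ), ψ l * (c * f l) = c * ∫ l in Ioi (0 : ℝ), ψ l * f l := by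
    simp_rw [mul_left_comm _ c, integral_const_mul]
  simp_rw [LaplaceLE, hright, mul_smul, integral_smul, norm_smul, Real.norm_of_nonneg hc]
  exact mul_le_mul_of_nonneg_left h hc

lemma sum {ι : Type*} {s : Finset ι} {f : ι → ℝ → ℝ} (h : ∀ i ∈ s, LaplaceLE μ φ N ψ (f i))
    (hφ : ∀ i ∈ s, Integrable (fun ξ => f i (N ξ) • φ ξ) μ)
    (hψ : ∀ i ∈ s, IntegrableOn (fun l => ψ l * f i l) (Ioi 0)) :
    LaplaceLE μ φ N ψ (fun l => ∑ i ∈ s, f i l) := by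
  simp_rw [LaplaceLE, Finset.sum_smul, Finset.mul_sum, integral_finsetSum s hφ,
    integral_finsetSum s hψ]
  exact (norm_sum_le _ _).trans (Finset.sum_le_sum h)

end LaplaceLE

namespace ExpDominated

lemma integrable_smul (h : ExpDominated μ φ N ψ) (hf : Measurable f) (hf1 : ∀ l > 0, |f l| ≤ 1) :
    Integrable (fun ξ => f (N ξ) • φ ξ) μ := by
  refine h.integrable.bdd_smul 1 (hf.comp h.measurable).aestronglyMeasurable ?_
  filter_upwards [h.pos] with ξ hξ using hf1 _ hξ

lemma integrableOn_mul (h : ExpDominated μ φ N ψ) (hf : Measurable f)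
    (hf1 : ∀ l > 0, |f l| ≤ 1) : IntegrableOn (fun l => ψ l * f l) (Ioi 0) := by
  refine Integrable.mul_bdd (c := 1) h.integrableOn hf.aestronglyMeasurable ?_
  filter_upwards [ae_restrict_mem measurableSet_Ioi] with l hl using hf1 l hl

lemma laplaceLE_of_tendsto (h : ExpDominated μ φ N ψ) {G : ℕ → ℝ → ℝ}
    (hG : ∀ k, Measurable (G k)) (hG1 : ∀ᶠ k in atTop, ∀ l > 0, |G k l| ≤ 1)
    (hlim : ∀ l > 0, Tendsto (fun k => G k l) atTop (𝓝 (f l)))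
    (hle : ∀ᶠ k in atTop, LaplaceLE μ φ N ψ (G k)) : LaplaceLE μ φ N ψ f := by
  have hleft : Tendsto (fun k => ∫ ξ, G k (N ξ) • φ ξ ∂μ) atTop (𝓝 (∫ ξ, f (N ξ) • φ ξ ∂μ)) := by
    refine tendsto_integral_filter_of_dominated_convergence (fun ξ => ‖φ ξ‖)
      (.of_forall fun k => ((hG k).comp h.measurable).aestronglyMeasurable.smul
        h.integrable.aestronglyMeasurable) ?_ h.integrable.norm ?_
    · filter_upwards [hG1] with k hk
      filter_upwards [h.pos] with ξ hξ
      rw [norm_smul]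
      exact mul_le_of_le_one_left (norm_nonneg _) (hk _ hξ)
    · filter_upwards [h.pos] with ξ hξ using (hlim _ hξ).smul_const _
  have hright : Tendsto (fun k => ∫ l in Ioi (0 : ℝ), ψ l * G k l) atTop
      (𝓝 (∫ l in Ioi (0 : ℝ), ψ l * f l)) := by
    refine tendsto_integral_filter_of_dominated_convergence (fun l => ‖ψ l‖)
      (.of_forall fun k => h.integrableOn.aestronglyMeasurable.mul (hG k).aestronglyMeasurable)
      ?_ h.integrableOn.norm ?_
    · filter_upwards [hG1] with k hk
      filter_upwards [ae_restrict_mem measurableSet_Ioi] with l hl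
      rw [norm_mul]
      exact mul_le_of_le_one_right (norm_nonneg _) (hk _ hl)
    · filter_upwards [ae_restrict_mem measurableSet_Ioi] with l hl using (hlim _ hl).const_mul _
  exact le_of_tendsto_of_tendsto hleft.norm hright hle

open Polynomial in
lemma laplaceLE_eval_exp (h : ExpDominated μ φ N ψ) {δ : ℝ} (hδ : 0 ≤ δ) {Q : ℝ[X]}
    (hQ : ∀ k, 0 ≤ Q.coeff k) : LaplaceLE μ φ N ψ (fun l => Q.eval (Real.exp (-δ * l))) := by
  have heval : ∀ l, Q.eval (Real.exp (-δ * l))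
      = ∑ k ∈ Q.support, Q.coeff k * Real.exp (-(k * δ) * l) := by
    intro l
    rw [eval_eq_sum, Polynomial.sum]
    refine Finset.sum_congr rfl fun k _ => ?_
    rw [← Real.exp_nat_mul]
    ring_nf
  have hexp1 : ∀ k : ℕ, ∀ l > 0, |Real.exp (-(k * δ) * l)| ≤ 1 := by
    intro k l hl
    rw [abs_of_nonneg (Real.exp_nonneg _), Real.exp_le_one_iff, neg_mul, neg_nonpos]
    positivity
  have hmeas : ∀ k : ℕ, Measurable fun l => Real.exp (-(k * δ) * l) := fun k => by fun_prop
  simp_rw [heval]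
  refine LaplaceLE.sum (fun k _ => (h.laplaceLE_exp _ (by positivity)).const_mul (hQ k))
    (fun k _ => ?_) (fun k _ => ?_)
  · simpa only [mul_smul] using (h.integrable_smul (hmeas k) (hexp1 k)).fun_smul (Q.coeff k)
  · simpa only [IntegrableOn, mul_left_comm] using
      (h.integrableOn_mul (hmeas k) (hexp1 k)).const_mul (Q.coeff k)

end ExpDominated

section Coeff

open Polynomial

lemma coeff_pow_nonneg {P : ℝ[X]} (hP : ∀ k, 0 ≤ P.coeff k) (m k : ℕ) :
    0 ≤ (P ^ m).coeff k := by
  induction m generalizing k with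
  | zero => rw [pow_zero, coeff_one]; split_ifs <;> norm_num
  | succ m ih =>
    rw [pow_succ, coeff_mul]
    exact Finset.sum_nonneg fun i _ => mul_nonneg (ih _) (hP _)

/-- The partial sums of the power series of `(1 - θ (1 - z) ^ α) ^ m` obtained from a power series
`∑ c k z ^ k` of `1 - (1 - z) ^ α`. -/
def subordPoly (c : ℕ → ℝ) (θ : ℝ) (m K : ℕ) : ℝ[X] :=
  (C (1 - θ) + C θ * ∑ k ∈ Finset.range K, C (c k) * X ^ k) ^ m

lemma eval_subordPoly (c : ℕ → ℝ) (θ : ℝ) (m K : ℕ) (z : ℝ) :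
    (subordPoly c θ m K).eval z = (1 - θ * (1 - ∑ k ∈ Finset.range K, c k * z ^ k)) ^ m := by
  simp only [subordPoly, eval_pow, eval_add, eval_C, eval_mul, eval_finsetSum, eval_X]
  ring

lemma coeff_subordPoly_nonneg {c : ℕ → ℝ} (hc : ∀ k, 0 ≤ c k) {θ : ℝ} (hθ : θ ∈ Icc 0 1)
    (m K k : ℕ) : 0 ≤ (subordPoly c θ m K).coeff k := by
  refine coeff_pow_nonneg (fun k => ?_) m k
  rw [coeff_add, coeff_C_mul, finsetSum_coeff, coeff_C]
  refine add_nonneg ?_ (mul_nonneg hθ.1 (Finset.sum_nonneg fun i _ => ?_))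
  · split_ifs <;> linarith [hθ.2]
  · rw [coeff_C_mul, coeff_X_pow]
    split_ifs <;> simp [hc]

end Coeff

lemma abs_one_sub_mul_pow_le_one {θ x : ℝ} (hθ : θ ∈ Icc 0 1) (hx : x ∈ Icc 0 1) (m : ℕ) :
    |(1 - θ * x) ^ m| ≤ 1 := by
  have hle : θ * x ≤ 1 := mul_le_one₀ hθ.2 hx.1 hx.2
  have hnonneg : 0 ≤ θ * x := mul_nonneg hθ.1 hx.1
  rw [abs_pow]
  exact pow_le_one₀ (abs_nonneg _) (abs_le.2 ⟨by linarith, by linarith⟩)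

lemma exp_neg_mul_mem_Ioo {δ l : ℝ} (hδ : 0 < δ) (hl : 0 < l) :
    Real.exp (-δ * l) ∈ Ioo 0 1 :=
  ⟨Real.exp_pos _, Real.exp_lt_one_iff.2 (by rw [neg_mul, neg_lt_zero]; positivity)⟩

lemma one_sub_exp_rpow_mem_Icc {α δ l : ℝ} (hα : 0 ≤ α) (hδ : 0 < δ) (hl : 0 < l) :
    (1 - Real.exp (-δ * l)) ^ α ∈ Icc 0 1 := by
  obtain ⟨hz0, hz1⟩ := exp_neg_mul_mem_Ioo hδ hl
  exact ⟨Real.rpow_nonneg (by linarith) _, Real.rpow_le_one (by linarith) (by linarith) hα⟩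

lemma ExpDominated.laplaceLE_one_sub_mul_rpow_pow (h : ExpDominated μ φ N ψ) {α δ θ : ℝ}
    (h0 : 0 < α) (h1 : α ≤ 1) (hδ : 0 < δ) (hθ : θ ∈ Icc 0 1) (m : ℕ) :
    LaplaceLE μ φ N ψ (fun l => (1 - θ * (1 - Real.exp (-δ * l)) ^ α) ^ m) := by
  obtain ⟨c, hc, hsum⟩ := exists_nonneg_hasSum_one_sub_one_sub_rpow h0 h1
  have hsum' : ∀ l > 0, HasSum (fun k => c k * Real.exp (-δ * l) ^ k)
      (1 - (1 - Real.exp (-δ * l)) ^ α) := fun l hl =>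
    hsum _ (by rw [abs_of_pos (Real.exp_pos _)]; exact (exp_neg_mul_mem_Ioo hδ hl).2)
  refine h.laplaceLE_of_tendsto
    (G := fun K l => (subordPoly c θ m K).eval (Real.exp (-δ * l)))
    (fun K => ((subordPoly c θ m K).continuous.comp (by fun_prop)).measurable)
    (.of_forall fun K l hl => ?_) (fun l hl => ?_)
    (.of_forall fun K => h.laplaceLE_eval_exp hδ.le (coeff_subordPoly_nonneg hc hθ m K))
  · have hterm : ∀ k, 0 ≤ c k * Real.exp (-δ * l) ^ k := fun k => mul_nonneg (hc k) (by positivity)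
    have hsumle := sum_le_hasSum (Finset.range K) (fun k _ => hterm k) (hsum' l hl)
    have hpartial := Finset.sum_nonneg fun k (_ : k ∈ Finset.range K) => hterm k
    have hrpow := one_sub_exp_rpow_mem_Icc h0.le hδ hl
    rw [eval_subordPoly]
    exact abs_one_sub_mul_pow_le_one hθ ⟨by linarith [hrpow.1], by linarith⟩ m
  · simp only [eval_subordPoly]
    simpa using ((((hsum' l hl).tendsto_sum_nat.const_sub 1).const_mul θ).const_sub 1).pow m

lemma tendsto_mul_one_sub_exp_neg_div (l : ℝ) :
    Tendsto (fun m : ℝ => m * (1 - Real.exp (-(1 / m) * l))) atTop (𝓝 l) := by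
  have hderiv : HasDerivAt (fun x : ℝ => -Real.exp (-x * l)) l 0 := by
    simpa [Pi.neg_def] using (((hasDerivAt_id (0 : ℝ)).neg.mul_const l).exp).neg
  refine ((hasDerivAt_iff_tendsto_slope_zero.1 hderiv).comp
    (tendsto_inv_atTop_nhdsGT_zero.mono_right (nhdsWithin_mono _ fun x hx => ne_of_gt hx))).congr
    fun m => ?_
  simp [add_comm, sub_eq_add_neg]

lemma tendsto_one_sub_rpow_pow {α t l : ℝ} (h0 : 0 < α) (hl : 0 < l) :
    Tendsto (fun k : ℕ => (1 - t * √k ^ α / k * (1 - Real.exp (-(1 / √k) * l)) ^ α) ^ k) atTop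
      (𝓝 (Real.exp (-t * l ^ α))) := by
  have hsqrt : Tendsto (fun k : ℕ => √(k : ℝ)) atTop atTop :=
    Real.tendsto_sqrt_atTop.comp tendsto_natCast_atTop_atTop
  have hlim : Tendsto (fun k : ℕ => (k : ℝ) *
      (-(t * √k ^ α / k * (1 - Real.exp (-(1 / √k) * l)) ^ α))) atTop (𝓝 (-t * l ^ α)) := by
    refine ((((tendsto_mul_one_sub_exp_neg_div l).comp hsqrt).rpow_const
      (p := α) (.inr h0.le)).const_mul (-t)).congr' ?_
    filter_upwards [eventually_gt_atTop 0] with k hk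
    have : (0 : ℝ) < k := by exact_mod_cast hk
    have hpos := (exp_neg_mul_mem_Ioo (show 0 < 1 / √(k : ℝ) by positivity) hl).2
    simp only [Function.comp_apply]
    rw [Real.mul_rpow (by positivity) (by linarith)]
    field_simp
  simpa [sub_eq_add_neg] using Real.tendsto_one_add_pow_exp_of_tendsto hlim

lemma eventually_mul_sqrt_rpow_div_le_one {α : ℝ} (h1 : α ≤ 1) (t : ℝ) :
    ∀ᶠ k : ℕ in atTop, t * √k ^ α / k ≤ 1 := by
  filter_upwards [tendsto_natCast_atTop_atTop.eventually_ge_atTop (t ^ 2 + 1)] with k hk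
  have hk1 : (1 : ℝ) ≤ k := by nlinarith [sq_nonneg t]
  have hrpow : √(k : ℝ) ^ α ≤ √k := by
    simpa using Real.rpow_le_rpow_of_exponent_le (Real.one_le_sqrt.2 hk1) h1
  have ht : t ≤ √(k : ℝ) := Real.le_sqrt_of_sq_le (by linarith)
  rw [div_le_one (by linarith)]
  calc t * √(k : ℝ) ^ α ≤ √k * √k := by gcongr
    _ = k := Real.mul_self_sqrt (by linarith)

-- Bochner's idea: `exp (-t l ^ α)` is a limit of powers `(1 - θ (1 - exp (-δ l)) ^ α) ^ k`, which
-- are power series in `exp (-δ l)` with nonnegative coefficients.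
theorem ExpDominated.laplaceLE_exp_neg_rpow (h : ExpDominated μ φ N ψ) {α t : ℝ} (h0 : 0 < α)
    (h1 : α ≤ 1) (ht : 0 ≤ t) : LaplaceLE μ φ N ψ (fun l => Real.exp (-t * l ^ α)) := by
  have hparam : ∀ᶠ k : ℕ in atTop, 0 < 1 / √(k : ℝ) ∧ t * √k ^ α / k ∈ Icc 0 1 := by
    filter_upwards [eventually_mul_sqrt_rpow_div_le_one h1 t, eventually_gt_atTop 0] with k hk hk0
    exact ⟨by positivity, by positivity, hk⟩
  refine h.laplaceLE_of_tendsto (G := fun k l =>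
      (1 - t * √k ^ α / k * (1 - Real.exp (-(1 / √k) * l)) ^ α) ^ k) (fun k => by fun_prop) ?_
    (fun l hl => tendsto_one_sub_rpow_pow h0 hl) ?_
  · filter_upwards [hparam] with k ⟨hδ, hθ⟩ l hl
    exact abs_one_sub_mul_pow_le_one hθ (one_sub_exp_rpow_mem_Icc h0.le hδ hl) k
  · filter_upwards [hparam] with k ⟨hδ, hθ⟩
    exact h.laplaceLE_one_sub_mul_rpow_pow h0 h1 hδ hθ k

end Subordination

/-! ### The gradient of the fractional heat kernel -/

section FourierKernel

open scoped RealInnerProductSpace Real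

lemma integrable_norm_pow_mul_exp_neg {E : Type*} [NormedAddCommGroup E] [NormedSpace ℝ E]
    [FiniteDimensional ℝ E] [Nontrivial E] [MeasurableSpace E] [BorelSpace E] (μ : Measure E)
    [μ.IsAddHaarMeasure] {a t : ℝ} (ha : 0 < a) (ht : 0 < t) (k : ℕ) :
    Integrable (fun ξ => ‖ξ‖ ^ k * Real.exp (-t * ‖ξ‖ ^ a)) μ := by
  refine (integrable_fun_norm_addHaar μ (f := fun r : ℝ => r ^ k * Real.exp (-t * r ^ a))).2 ?_
  refine (integrableOn_rpow_mul_exp_neg_mul_rpow (s := ((Module.finrank ℝ E - 1 + k : ℕ) : ℝ))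
    (by linarith [Nat.cast_nonneg (α := ℝ) (Module.finrank ℝ E - 1 + k)]) ha ht).congr_fun
    (fun r _ => ?_) measurableSet_Ioi
  simp only [Real.rpow_natCast, smul_eq_mul, pow_add]
  ring

lemma rpow_mul_exp_neg_div_le {κ a s S : ℝ} (hκ : 0 ≤ κ) (ha : 0 < a) (hs : 0 ≤ s)
    (hsS : s ≤ S) (hS : 0 < S) :
    (1 / S) ^ κ * Real.exp (-a / S) ≤ ⌈κ⌉₊.factorial * Real.exp 1 * (1 / (a + s)) ^ κ := by
  have hgrowth : (1 + a / S) ^ κ ≤ ⌈κ⌉₊.factorial * Real.exp (1 + a / S) := by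
    have ha' : 0 ≤ a / S := by positivity
    calc (1 + a / S) ^ κ ≤ (1 + a / S) ^ (⌈κ⌉₊ : ℝ) :=
          Real.rpow_le_rpow_of_exponent_le (by linarith) (Nat.le_ceil κ)
      _ = (1 + a / S) ^ ⌈κ⌉₊ := Real.rpow_natCast _ _
      _ ≤ _ := (div_le_iff₀' (by positivity)).1
          (Real.pow_div_factorial_le_exp (1 + a / S) (by positivity) ⌈κ⌉₊)
  have hsplit : (1 / S) ^ κ = (1 + a / S) ^ κ * (1 / (S + a)) ^ κ := by
    rw [← Real.mul_rpow (by positivity) (by positivity)]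
    congr 1
    field_simp
  have hmono : (1 / (S + a)) ^ κ ≤ (1 / (a + s)) ^ κ :=
    Real.rpow_le_rpow (by positivity)
      (one_div_le_one_div_of_le (by linarith) (by linarith)) hκ
  calc (1 / S) ^ κ * Real.exp (-a / S)
      ≤ (⌈κ⌉₊.factorial * Real.exp (1 + a / S)) * (1 / (a + s)) ^ κ * Real.exp (-a / S) := by
        rw [hsplit]; gcongr
    _ = _ := by
        rw [Real.exp_add, neg_div, Real.exp_neg]
        field_simp

variable {V : Type*} [NormedAddCommGroup V] [InnerProductSpace ℝ V]

/-- The derivative in `z` of the Fourier phase `exp (-2πi⟪ξ, z⟫)`. -/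
def dPhase (z ξ : V) : V →L[ℝ] ℂ :=
  𝐞 (-⟪ξ, z⟫) • VectorFourier.fourierSMulRight (innerSL ℝ) (fun _ => (1 : ℂ)) ξ

lemma norm_dPhase (z ξ : V) : ‖dPhase z ξ‖ = 2 * π * ‖ξ‖ := by
  rw [dPhase, Circle.smul_def, norm_smul, Circle.norm_coe, one_mul,
    VectorFourier.norm_fourierSMulRight, innerSL_apply_norm, norm_one, mul_one]

@[fun_prop]
lemma continuous_dPhase (z : V) : Continuous (dPhase z) := by
  unfold dPhase VectorFourier.fourierSMulRight
  have : Continuous fun ξ : V => 𝐞 (-⟪ξ, z⟫) := Real.continuous_fourierChar.comp (by fun_prop)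
  fun_prop

/-- The subordination density: up to a constant, the gradient at `z` of the Fourier transform of
`ξ ↦ exp (-s‖ξ‖²)` is bounded by the Laplace transform of `gradDensity z` at `s`. -/
def gradDensity (z : V) (l : ℝ) : ℝ :=
  ‖z‖ * (l ^ (Module.finrank ℝ V / 2 : ℝ) * Real.exp (-(π ^ 2 * ‖z‖ ^ 2 * l)))

lemma gradDensity_nonneg (z : V) {l : ℝ} (hl : 0 ≤ l) : 0 ≤ gradDensity z l := by
  unfold gradDensity
  positivity

lemma gradDensity_mul_exp_neg_mul (z : V) (s l : ℝ) :
    gradDensity z l * Real.exp (-s * l) = ‖z‖ * (l ^ (Module.finrank ℝ V / 2 + 1 - 1 : ℝ) *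
      Real.exp (-((π ^ 2 * ‖z‖ ^ 2 + s) * l))) := by
  rw [gradDensity, add_sub_cancel_right,
    show -((π ^ 2 * ‖z‖ ^ 2 + s) * l) = -(π ^ 2 * ‖z‖ ^ 2 * l) + -s * l by ring, Real.exp_add]
  ring

lemma integral_gradDensity_mul_exp_neg_mul {z : V} (hz : z ≠ 0) {s : ℝ} (hs : 0 ≤ s) :
    ∫ l in Ioi 0, gradDensity z l * Real.exp (-s * l) =
      ‖z‖ * ((1 / (π ^ 2 * ‖z‖ ^ 2 + s)) ^ (Module.finrank ℝ V / 2 + 1 : ℝ) *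
        Real.Gamma (Module.finrank ℝ V / 2 + 1)) := by
  have : 0 < ‖z‖ := norm_pos_iff.2 hz
  simp_rw [gradDensity_mul_exp_neg_mul, integral_const_mul]
  rw [Real.integral_rpow_mul_exp_neg_mul_Ioi (by positivity) (by positivity)]

lemma integrableOn_gradDensity {z : V} (hz : z ≠ 0) : IntegrableOn (gradDensity z) (Ioi 0) := by
  have : 0 < ‖z‖ := norm_pos_iff.2 hz
  change Integrable (fun l => gradDensity z l) _
  simpa [gradDensity, IntegrableOn] using (integrableOn_rpow_mul_exp_neg_mul_rpow
    (s := (Module.finrank ℝ V / 2 : ℝ)) (p := 1) (b := π ^ 2 * ‖z‖ ^ 2)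
    (neg_one_lt_zero.trans_le (by positivity)) one_pos (by positivity)).const_mul ‖z‖

variable [FiniteDimensional ℝ V] [MeasurableSpace V] [BorelSpace V]

section Fourier

variable {g : V → ℝ} (hg : Integrable g) (hg' : Integrable fun ξ => ‖ξ‖ * g ξ)
include hg hg'

lemma hasFDerivAt_fourier_ofReal (z : V) :
    HasFDerivAt (𝓕 fun ξ => (g ξ : ℂ)) (∫ ξ, g ξ • dPhase z ξ) z := by
  have hnorm : Integrable fun ξ => ‖ξ‖ * ‖(g ξ : ℂ)‖ := by
    simpa only [norm_mul, norm_norm, Complex.norm_real] using hg'.norm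
  convert! Real.hasFDerivAt_fourier hg.ofReal hnorm z using 1
  rw [Real.fourier_eq]
  refine integral_congr_ae (.of_forall fun ξ => ?_)
  ext v
  simp only [dPhase, VectorFourier.fourierSMulRight_apply, smul_apply, Circle.smul_def,
    smul_eq_mul, Complex.real_smul]
  ring

end Fourier

lemma hasFDerivAt_fourier_gaussian {S : ℝ} (hS : 0 < S) (z : V) :
    HasFDerivAt (𝓕 fun ξ : V => (Real.exp (-S * ‖ξ‖ ^ 2) : ℂ))
      (Complex.ofRealCLM ∘L ((π / S) ^ (Module.finrank ℝ V / 2 : ℝ) •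
        (Real.exp (-π ^ 2 / S * ‖z‖ ^ 2) • ((-π ^ 2 / S) • ((2 : ℝ) • innerSL ℝ z))))) z := by
  have hformula : 𝓕 (fun ξ : V => (Real.exp (-S * ‖ξ‖ ^ 2) : ℂ)) = fun w =>
      Complex.ofRealCLM ((π / S) ^ (Module.finrank ℝ V / 2 : ℝ) *
        Real.exp (-π ^ 2 / S * ‖w‖ ^ 2)) := by
    ext w
    have := fourier_gaussian_innerProductSpace (V := V) (b := (S : ℂ)) (by simpa using hS) w
    push_cast [Complex.ofRealCLM_apply]
    rw [this, Complex.ofReal_cpow (by positivity)]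
    push_cast
    ring_nf
  have hsq : HasFDerivAt (fun w : V => ‖w‖ ^ 2) ((2 : ℝ) • innerSL ℝ z) z := by
    simpa only [ofNat_smul_eq_nsmul ℝ 2] using (hasStrictFDerivAt_norm_sq z).hasFDerivAt
  rw [hformula]
  exact Complex.ofRealCLM.hasFDerivAt.comp z (((hsq.const_mul _).exp).const_mul _)

lemma norm_fderiv_fourier_gaussian_le {S : ℝ} (hS : 0 < S) (z : V) :
    ‖fderiv ℝ (𝓕 fun ξ : V => (Real.exp (-S * ‖ξ‖ ^ 2) : ℂ)) z‖ ≤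
      2 * π ^ 2 * π ^ (Module.finrank ℝ V / 2 : ℝ) * ‖z‖ *
        ((1 / S) ^ (Module.finrank ℝ V / 2 + 1 : ℝ) * Real.exp (-(π ^ 2 * ‖z‖ ^ 2) / S)) := by
  rw [(hasFDerivAt_fourier_gaussian hS z).fderiv]
  refine (ContinuousLinearMap.opNorm_comp_le _ _).trans_eq ?_
  rw [Complex.ofRealCLM_norm, one_mul]
  simp only [norm_smul, innerSL_apply_norm, norm_div, norm_neg]
  rw [Real.norm_of_nonneg (by positivity), Real.norm_of_nonneg (by positivity),
    Real.norm_of_nonneg (by positivity), Real.norm_of_nonneg hS.le, Real.norm_ofNat,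
    Real.rpow_add_one (by positivity), div_eq_mul_one_div π S,
    Real.mul_rpow (by positivity) (by positivity)]
  ring_nf

lemma exists_norm_fderiv_fourier_gaussian_le_integral (V : Type*) [NormedAddCommGroup V]
    [InnerProductSpace ℝ V] [FiniteDimensional ℝ V] [MeasurableSpace V] [BorelSpace V] :
    ∃ A > 0, ∀ z : V, z ≠ 0 → ∀ s ≥ 0, ∀ S > 0, s ≤ S →
      ‖fderiv ℝ (𝓕 fun ξ : V => (Real.exp (-S * ‖ξ‖ ^ 2) : ℂ)) z‖ ≤
        A * ∫ l in Ioi 0, gradDensity z l * Real.exp (-s * l) := by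
  set κ : ℝ := Module.finrank ℝ V / 2 + 1 with hκ
  have hκ0 : 0 < κ := by positivity
  have : 0 < Real.Gamma κ := Real.Gamma_pos_of_pos hκ0
  refine ⟨2 * π ^ 2 * π ^ (Module.finrank ℝ V / 2 : ℝ) * (⌈κ⌉₊.factorial * Real.exp 1) /
    Real.Gamma κ, by positivity, fun z hz s hs S hS hsS => ?_⟩
  have : 0 < ‖z‖ := norm_pos_iff.2 hz
  rw [integral_gradDensity_mul_exp_neg_mul hz hs]
  calc _ ≤ _ := norm_fderiv_fourier_gaussian_le hS z
    _ ≤ _ := mul_le_mul_of_nonneg_left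
        (rpow_mul_exp_neg_div_le hκ0.le (by positivity) hs hsS hS) (by positivity)
    _ = _ := by rw [← hκ]; field_simp

variable [Nontrivial V]

lemma hasFDerivAt_fourier_exp_neg {a t : ℝ} (ha : 0 < a) (ht : 0 < t) (z : V) :
    HasFDerivAt (𝓕 fun ξ : V => (Real.exp (-t * ‖ξ‖ ^ a) : ℂ))
      (∫ ξ, Real.exp (-t * ‖ξ‖ ^ a) • dPhase z ξ) z :=
  hasFDerivAt_fourier_ofReal
    (by simpa using integrable_norm_pow_mul_exp_neg (volume : Measure V) ha ht 0)
    (by simpa using integrable_norm_pow_mul_exp_neg (volume : Measure V) ha ht 1) z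

lemma exists_expDominated_gaussian (V : Type*) [NormedAddCommGroup V]
    [InnerProductSpace ℝ V] [FiniteDimensional ℝ V] [MeasurableSpace V] [BorelSpace V]
    [Nontrivial V] :
    ∃ A > 0, ∀ z : V, z ≠ 0 → ∀ η > 0, ExpDominated volume
      (fun ξ => Real.exp (-η * ‖ξ‖ ^ 2) • dPhase z ξ) (fun ξ => ‖ξ‖ ^ 2)
      (fun l => A * gradDensity z l) := by
  obtain ⟨A, hA, hgauss⟩ := exists_norm_fderiv_fourier_gaussian_le_integral V
  refine ⟨A, hA, fun z hz η hη => ⟨?_, by fun_prop, ?_, (integrableOn_gradDensity hz).const_mul A,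
    fun s hs => ?_⟩⟩
  · refine ((integrable_norm_pow_mul_exp_neg volume two_pos hη 1).const_mul (2 * π)).mono'
      (by fun_prop) (.of_forall fun ξ => le_of_eq ?_)
    rw [norm_smul, norm_dPhase, Real.norm_of_nonneg (Real.exp_nonneg _), Real.rpow_two]
    ring
  · filter_upwards [Measure.ae_ne volume (0 : V)] with ξ hξ
    positivity
  · have hmerge : ∀ ξ : V, Real.exp (-s * ‖ξ‖ ^ 2) • Real.exp (-η * ‖ξ‖ ^ 2) • dPhase z ξ =
        Real.exp (-(s + η) * ‖ξ‖ ^ (2 : ℝ)) • dPhase z ξ := fun ξ => by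
      rw [smul_smul, ← Real.exp_add, Real.rpow_two]
      ring_nf
    have hderiv := (hasFDerivAt_fourier_exp_neg two_pos (by positivity : 0 < s + η) z).fderiv
    simp only [Real.rpow_two] at hderiv
    simp_rw [LaplaceLE, hmerge, Real.rpow_two, ← hderiv, mul_assoc, integral_const_mul]
    exact hgauss z hz s hs _ (by positivity) (by linarith)

lemma tendsto_integral_exp_neg_mul_gaussian {a t : ℝ} (ha : 0 < a) (ht : 0 < t) (z : V) :
    Tendsto (fun η => ∫ ξ, Real.exp (-t * ‖ξ‖ ^ a) • Real.exp (-η * ‖ξ‖ ^ 2) • dPhase z ξ)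
      (𝓝[>] 0) (𝓝 (∫ ξ, Real.exp (-t * ‖ξ‖ ^ a) • dPhase z ξ)) := by
  refine tendsto_integral_filter_of_dominated_convergence
    (fun ξ => 2 * π * (‖ξ‖ ^ 1 * Real.exp (-t * ‖ξ‖ ^ a))) (.of_forall fun η => ?_) ?_
    ((integrable_norm_pow_mul_exp_neg volume ha ht 1).const_mul _) (.of_forall fun ξ => ?_)
  · have hexp : Measurable fun ξ : V => Real.exp (-t * ‖ξ‖ ^ a) := by fun_prop
    have hphase : Continuous fun ξ => Real.exp (-η * ‖ξ‖ ^ 2) • dPhase z ξ := by fun_prop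
    exact hexp.aestronglyMeasurable.smul hphase.aestronglyMeasurable
  · filter_upwards [self_mem_nhdsWithin] with η (hη : 0 < η)
    refine .of_forall fun ξ => ?_
    have hexp : Real.exp (-η * ‖ξ‖ ^ 2) ≤ 1 := by
      rw [Real.exp_le_one_iff, neg_mul, neg_nonpos]
      positivity
    rw [norm_smul, norm_smul, norm_dPhase, Real.norm_of_nonneg (Real.exp_nonneg _),
      Real.norm_of_nonneg (Real.exp_nonneg _)]
    calc _ ≤ Real.exp (-t * ‖ξ‖ ^ a) * (1 * (2 * π * ‖ξ‖)) := by gcongr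
      _ = _ := by ring
  · have hcont : Continuous fun η : ℝ =>
        Real.exp (-t * ‖ξ‖ ^ a) • Real.exp (-η * ‖ξ‖ ^ 2) • dPhase z ξ := by fun_prop
    simpa using (hcont.tendsto 0).mono_left nhdsWithin_le_nhds

/-- The pointwise majorant of the gradient of the fractional heat kernel that subordination gives,
up to a constant. -/
def gradMajorant (α t : ℝ) (z : V) : ℝ≥0∞ :=
  ∫⁻ l in Ioi 0, ENNReal.ofReal (gradDensity z l * Real.exp (-t * l ^ α))

theorem exists_enorm_fderiv_fourier_exp_neg_le (V : Type*) [NormedAddCommGroup V]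
    [InnerProductSpace ℝ V] [FiniteDimensional ℝ V] [MeasurableSpace V] [BorelSpace V]
    [Nontrivial V] {α : ℝ} (h0 : 0 < α) (h1 : α ≤ 1) :
    ∃ A > 0, ∀ t > 0, ∀ z : V, z ≠ 0 →
      ‖fderiv ℝ (𝓕 fun ξ : V => (Real.exp (-t * ‖ξ‖ ^ (2 * α)) : ℂ)) z‖ₑ ≤
        ENNReal.ofReal A * gradMajorant α t z := by
  obtain ⟨A, hA, hdom⟩ := exists_expDominated_gaussian V
  refine ⟨A, hA, fun t ht z hz => ?_⟩
  have hpow : ∀ ξ : V, (‖ξ‖ ^ 2) ^ α = ‖ξ‖ ^ (2 * α) := fun ξ => by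
    rw [Real.rpow_mul (norm_nonneg _), Real.rpow_two]
  have hreg : ∀ η > 0, ‖∫ ξ, Real.exp (-t * ‖ξ‖ ^ (2 * α)) • Real.exp (-η * ‖ξ‖ ^ 2) •
      dPhase z ξ‖ ≤ ∫ l in Ioi 0, A * gradDensity z l * Real.exp (-t * l ^ α) := by
    intro η hη
    simpa only [LaplaceLE, hpow] using (hdom z hz η hη).laplaceLE_exp_neg_rpow h0 h1 ht.le
  have hlim := (tendsto_integral_exp_neg_mul_gaussian (by positivity : 0 < 2 * α) ht z).norm
  rw [← (hasFDerivAt_fourier_exp_neg (by positivity) ht z).fderiv] at hlim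
  have hnorm := le_of_tendsto hlim (eventually_mem_nhdsWithin.mono hreg)
  simp_rw [mul_assoc, integral_const_mul] at hnorm
  rw [← ofReal_norm, gradMajorant]
  refine (ENNReal.ofReal_le_ofReal hnorm).trans ?_
  rw [ENNReal.ofReal_mul hA.le]
  gcongr
  rw [integral_eq_lintegral_of_nonneg_ae]
  · exact ENNReal.ofReal_toReal_le
  · filter_upwards [ae_restrict_mem measurableSet_Ioi] with l (hl : 0 < l)
    exact mul_nonneg (gradDensity_nonneg z hl.le) (Real.exp_nonneg _)
  · unfold gradDensity
    exact Measurable.aestronglyMeasurable (by fun_prop)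

lemma lintegral_exp_neg_mul {c : ℝ} (hc : 0 < c) :
    ∫⁻ t in Ioi (0 : ℝ), ENNReal.ofReal (Real.exp (-t * c)) = ENNReal.ofReal c⁻¹ := by
  have hint : IntegrableOn (fun t : ℝ => Real.exp (-t * c)) (Ioi 0) := by
    simpa only [neg_mul, mul_comm c] using exp_neg_integrableOn_Ioi 0 hc
  rw [← ofReal_integral_eq_lintegral_ofReal hint (.of_forall fun t => Real.exp_nonneg _)]
  congr 1
  simpa [mul_comm c] using Real.integral_rpow_mul_exp_neg_mul_Ioi one_pos hc

end FourierKernel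

/-! ### The Duhamel term and Riesz potentials -/

section Riesz

variable {E : Type*} [NormedAddCommGroup E] [NormedSpace ℝ E]

/-- The unnormalised Riesz kernel `‖z‖ ^ (γ - d)` on a `d`-dimensional space; for `γ < d` it is `∞`
at the origin. -/
def rieszKer (γ : ℝ) (z : E) : ℝ≥0∞ := ‖z‖ₑ ^ (γ - Module.finrank ℝ E)

/-- The unnormalised Riesz potential of order `γ`. -/
def rieszPotential [MeasurableSpace E] (μ : Measure E) (γ : ℝ) (f : E → ℝ≥0∞) (x : E) : ℝ≥0∞ :=
  ∫⁻ y, rieszKer γ (x - y) * f y ∂μ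

end Riesz

section KernelIntegral

open scoped Real

variable {V : Type*} [NormedAddCommGroup V] [InnerProductSpace ℝ V]

lemma lintegral_gradDensity_mul_exp_neg (z : V) (α : ℝ) {l : ℝ} (hl : 0 < l) :
    ∫⁻ t in Ioi 0, ENNReal.ofReal (gradDensity z l * Real.exp (-t * l ^ α)) =
      ENNReal.ofReal (‖z‖ * (l ^ (Module.finrank ℝ V / 2 + 1 - α - 1) *
        Real.exp (-(π ^ 2 * ‖z‖ ^ 2 * l)))) := by
  simp_rw [ENNReal.ofReal_mul (gradDensity_nonneg z hl.le)]
  rw [lintegral_const_mul' _ _ ENNReal.ofReal_ne_top, lintegral_exp_neg_mul (by positivity),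
    ← ENNReal.ofReal_mul (gradDensity_nonneg z hl.le), gradDensity,
    show Module.finrank ℝ V / 2 + 1 - α - 1 = (Module.finrank ℝ V / 2 : ℝ) + -α by ring,
    Real.rpow_add hl, Real.rpow_neg hl.le]
  ring_nf

lemma mul_one_div_mul_sq_rpow {c x : ℝ} (hc : 0 ≤ c) (hx : 0 < x) (κ : ℝ) :
    x * (1 / (c * x ^ 2)) ^ κ = (1 / c) ^ κ * x ^ (1 - 2 * κ) := by
  rw [← one_div_mul_one_div, Real.mul_rpow (by positivity) (by positivity), one_div (x ^ 2),
    Real.inv_rpow (by positivity), ← Real.rpow_two, ← Real.rpow_mul hx.le, sub_eq_add_neg,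
    Real.rpow_add hx, Real.rpow_one, Real.rpow_neg hx.le]
  ring

lemma exists_lintegral_gradMajorant_eq (V : Type*) [NormedAddCommGroup V] [InnerProductSpace ℝ V]
    {α : ℝ} (hα : α < Module.finrank ℝ V / 2 + 1) :
    ∃ A > 0, ∀ z : V, z ≠ 0 →
      ∫⁻ t in Ioi (0 : ℝ), gradMajorant α t z = ENNReal.ofReal A * rieszKer (2 * α - 1) z := by
  set κ : ℝ := Module.finrank ℝ V / 2 + 1 - α with hκ
  have hκ0 : 0 < κ := by linarith
  have : 0 < Real.Gamma κ := Real.Gamma_pos_of_pos hκ0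
  refine ⟨(1 / π ^ 2) ^ κ * Real.Gamma κ, by positivity, fun z hz => ?_⟩
  have hz' : 0 < ‖z‖ := norm_pos_iff.2 hz
  have hint : IntegrableOn (fun l : ℝ => ‖z‖ * (l ^ (κ - 1) *
      Real.exp (-(π ^ 2 * ‖z‖ ^ 2 * l)))) (Ioi 0) := by
    simpa [IntegrableOn] using (integrableOn_rpow_mul_exp_neg_mul_rpow (s := κ - 1) (p := 1)
      (b := π ^ 2 * ‖z‖ ^ 2) (by linarith) one_pos (by positivity)).const_mul ‖z‖
  unfold gradMajorant
  rw [lintegral_lintegral_swap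
      (Measurable.aemeasurable (by unfold Function.uncurry gradDensity; fun_prop)),
    setLIntegral_congr_fun measurableSet_Ioi
      fun l hl => lintegral_gradDensity_mul_exp_neg z α hl,
    ← hκ, ← ofReal_integral_eq_lintegral_ofReal hint, integral_const_mul,
    Real.integral_rpow_mul_exp_neg_mul_Ioi hκ0 (by positivity), rieszKer, ← ofReal_norm,
    ENNReal.ofReal_rpow_of_pos hz', ← ENNReal.ofReal_mul (by positivity)]
  · rw [← mul_assoc, mul_one_div_mul_sq_rpow (by positivity) hz',
      show 1 - 2 * κ = 2 * α - 1 - Module.finrank ℝ V by rw [hκ]; ring]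
    ring_nf
  · filter_upwards [ae_restrict_mem measurableSet_Ioi] with l (hl : 0 < l)
    positivity

end KernelIntegral

section Duhamel

lemma setLIntegral_comp_sub_le (f : ℝ → ℝ≥0∞) (t : ℝ) :
    ∫⁻ s in Ioo 0 t, f (t - s) ≤ ∫⁻ s in Ioi 0, f s := by
  rw [← lintegral_indicator measurableSet_Ioi,
    ← lintegral_sub_left_eq_self ((Ioi 0).indicator f) t, ← lintegral_indicator measurableSet_Ioo]
  refine lintegral_mono fun s => ?_
  by_cases hs : s ∈ Ioo 0 t
  · rw [indicator_of_mem hs, indicator_of_mem (show t - s ∈ Ioi 0 by simpa using hs.2)]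
  · simp only [indicator_of_notMem hs, zero_le]

variable {G : Type*} [AddCommGroup G] [MeasurableSpace G] [MeasurableAdd₂ G] [MeasurableNeg G]
  {μ : Measure G} [SFinite μ] [μ.IsAddLeftInvariant] {k F : ℝ → G → ℝ} {M : ℝ → G → ℝ≥0∞}
  {R W : G → ℝ≥0∞}

lemma lintegral_setLIntegral_sub_mul_le (hM : Measurable (Function.uncurry M))
    (hMR : ∀ᵐ z ∂μ, ∫⁻ t in Ioi 0, M t z ≤ R z)
    (hFW : ∀ y, ∀ᵐ s ∂volume.restrict (Ioi 0), ‖F s y‖ₑ ≤ W y) (t : ℝ) (x : G) :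
    ∫⁻ y, (∫⁻ s in Ioo 0 t, M (t - s) (x - y) * ‖F s y‖ₑ) ∂μ ≤ ∫⁻ y, R (x - y) * W y ∂μ := by
  refine lintegral_mono_ae ?_
  filter_upwards [(quasiMeasurePreserving_sub_left μ x).ae hMR] with y hy
  have hMy : Measurable fun s => M (t - s) (x - y) :=
    hM.comp (by fun_prop : Measurable fun s : ℝ => (t - s, x - y))
  calc ∫⁻ s in Ioo 0 t, M (t - s) (x - y) * ‖F s y‖ₑ
      ≤ ∫⁻ s in Ioo 0 t, M (t - s) (x - y) * W y := by
        refine lintegral_mono_ae ?_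
        filter_upwards [ae_mono (Measure.restrict_mono Ioo_subset_Ioi_self le_rfl) (hFW y)]
          with s hs using by gcongr
    _ = (∫⁻ s in Ioo 0 t, M (t - s) (x - y)) * W y := lintegral_mul_const _ hMy
    _ ≤ R (x - y) * W y := by
        gcongr
        exact (setLIntegral_comp_sub_le (fun s => M s (x - y)) t).trans hy

lemma enorm_setIntegral_conv_le (hM : Measurable (Function.uncurry M))
    (hkM : ∀ t > 0, ∀ᵐ z ∂μ, ‖k t z‖ₑ ≤ M t z) (hMR : ∀ᵐ z ∂μ, ∫⁻ t in Ioi 0, M t z ≤ R z)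
    (hF : Measurable (Function.uncurry F))
    (hFW : ∀ y, ∀ᵐ s ∂volume.restrict (Ioi 0), ‖F s y‖ₑ ≤ W y) (t : ℝ) (x : G) :
    ‖∫ s in Ioc 0 t, ∫ y, k (t - s) (x - y) * F s y ∂μ‖ₑ ≤ ∫⁻ y, R (x - y) * W y ∂μ := by
  have hmeas : Measurable fun q : ℝ × G => M (t - q.1) (x - q.2) * ‖F q.1 q.2‖ₑ :=
    (hM.comp (by fun_prop : Measurable fun q : ℝ × G => (t - q.1, x - q.2))).mul
      (measurable_enorm.comp hF)
  rw [← restrict_Ioo_eq_restrict_Ioc]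
  calc ‖∫ s in Ioo 0 t, ∫ y, k (t - s) (x - y) * F s y ∂μ‖ₑ
      ≤ ∫⁻ s in Ioo 0 t, ‖∫ y, k (t - s) (x - y) * F s y ∂μ‖ₑ :=
        enorm_integral_le_lintegral_enorm _
    _ ≤ ∫⁻ s in Ioo 0 t, ∫⁻ y, M (t - s) (x - y) * ‖F s y‖ₑ ∂μ := by
        refine setLIntegral_mono' measurableSet_Ioo fun s hs => ?_
        refine (enorm_integral_le_lintegral_enorm _).trans (lintegral_mono_ae ?_)
        filter_upwards [(quasiMeasurePreserving_sub_left μ x).ae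
          (hkM (t - s) (sub_pos.2 hs.2))] with y hy
        rw [enorm_mul]
        gcongr
    _ = ∫⁻ y, (∫⁻ s in Ioo 0 t, M (t - s) (x - y) * ‖F s y‖ₑ) ∂μ :=
        lintegral_lintegral_swap hmeas.aemeasurable
    _ ≤ ∫⁻ y, R (x - y) * W y ∂μ := lintegral_setLIntegral_sub_mul_le hM hMR hFW t x

end Duhamel

section HeatDuhamel

variable {n : ℕ} [Nontrivial (Rn n)] {α : ℝ}

lemma enorm_dKer_le (hα : 0 < α) {t : ℝ} (ht : 0 < t) (j : Fin n) (z : Rn n) :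
    ‖dKer n α t j z‖ₑ ≤
      ‖fderiv ℝ (𝓕 fun ξ : Rn n => (Real.exp (-t * ‖ξ‖ ^ (2 * α)) : ℂ)) z‖ₑ := by
  set f := 𝓕 fun ξ : Rn n => (Real.exp (-t * ‖ξ‖ ^ (2 * α)) : ℂ) with hf
  have hg : gKer n α t = Complex.reCLM ∘ f := by
    ext x
    simp [gKer, hf, Real.fourierInv_eq_fourier_comp_neg]
  have hderiv := Complex.reCLM.hasFDerivAt.comp z
    (hasFDerivAt_fourier_exp_neg (by positivity : 0 < 2 * α) ht z).differentiableAt.hasFDerivAt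
  rw [dKer, hg, hderiv.fderiv, enorm_le_iff_norm_le]
  calc ‖(fderiv ℝ f z (EuclideanSpace.single j 1)).re‖
      ≤ ‖fderiv ℝ f z (EuclideanSpace.single j 1)‖ := Complex.abs_re_le_norm _
    _ ≤ ‖fderiv ℝ f z‖ := ContinuousLinearMap.unit_le_opNorm _ _ (by simp)

lemma measurable_gradMajorant (n : ℕ) (α : ℝ) :
    Measurable (Function.uncurry (gradMajorant (V := Rn n) α)) := by
  unfold Function.uncurry gradMajorant gradDensity
  refine Measurable.lintegral_prod_right' (f := fun q : (ℝ × Rn n) × ℝ => ENNReal.ofReal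
    (‖q.1.2‖ * (q.2 ^ (Module.finrank ℝ (Rn n) / 2 : ℝ) *
      Real.exp (-(Real.pi ^ 2 * ‖q.1.2‖ ^ 2 * q.2))) * Real.exp (-q.1.1 * q.2 ^ α))) (by fun_prop)

theorem exists_enorm_duhamel_le_rieszPotential (hα0 : 0 < α) (hα1 : α ≤ 1) (hαn : 2 * α - 1 < n) :
    ∃ A > 0, ∀ (F : ℝ → Rn n → ℝ) (W : Rn n → ℝ≥0∞), Measurable (Function.uncurry F) →
      (∀ y, ∀ᵐ s ∂volume.restrict (Ioi 0), ‖F s y‖ₑ ≤ W y) → ∀ t x,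
        ‖∑ j : Fin n, ∫ s in Ioc (0 : ℝ) t, conv n (dKer n α (t - s) j) (F s) x‖ₑ ≤
          ENNReal.ofReal A * rieszPotential volume (2 * α - 1) W x := by
  obtain ⟨A, hA, hgrad⟩ := exists_enorm_fderiv_fourier_exp_neg_le (Rn n) hα0 hα1
  obtain ⟨B, hB, htime⟩ := exists_lintegral_gradMajorant_eq (Rn n) (α := α)
    (by rw [finrank_euclideanSpace_fin]; linarith)
  have hn : 0 < n := Fin.pos_iff_nonempty.2 (by
    by_contra h
    rw [not_nonempty_iff] at h
    exact not_subsingleton (Rn n) inferInstance)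
  refine ⟨n * (A * B), by positivity, fun F W hF hFW t x => ?_⟩
  have hne : ∀ᵐ z : Rn n, z ≠ 0 := Measure.ae_ne volume 0
  have hterm : ∀ j : Fin n, ‖∫ s in Ioc (0 : ℝ) t, conv n (dKer n α (t - s) j) (F s) x‖ₑ ≤
      ENNReal.ofReal (A * B) * rieszPotential volume (2 * α - 1) W x := by
    intro j
    rw [rieszPotential, ← lintegral_const_mul' _ _ ENNReal.ofReal_ne_top]
    simp_rw [← mul_assoc]
    refine enorm_setIntegral_conv_le (μ := volume) (k := fun t => dKer n α t j)
      (M := fun t z => ENNReal.ofReal A * gradMajorant α t z)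
      (R := fun z => ENNReal.ofReal (A * B) * rieszKer (2 * α - 1) z)
      ((measurable_gradMajorant n α).const_mul _) (fun t ht => ?_) ?_ hF hFW t x
    · filter_upwards [hne] with z hz using (enorm_dKer_le hα0 ht j z).trans (hgrad t ht z hz)
    · filter_upwards [hne] with z hz
      rw [lintegral_const_mul' _ _ ENNReal.ofReal_ne_top, htime z hz, ← mul_assoc,
        ENNReal.ofReal_mul hA.le]
  refine (enorm_sum_le _ _).trans ((Finset.sum_le_sum fun j _ => hterm j).trans_eq ?_)
  rw [Finset.sum_const, Finset.card_univ, Fintype.card_fin, nsmul_eq_mul,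
    ENNReal.ofReal_mul (p := (n : ℝ)) (by positivity), ENNReal.ofReal_natCast, mul_assoc]

end HeatDuhamel

/-! ### The Hardy–Littlewood maximal function -/

section Average

variable {X : Type*} [MeasurableSpace X] {μ : Measure X} {f : X → ℝ≥0∞}

lemma laverage_add_left (hf : Measurable f) (g : X → ℝ≥0∞) :
    ⨍⁻ x, (f x + g x) ∂μ = ⨍⁻ x, f x ∂μ + ⨍⁻ x, g x ∂μ :=
  lintegral_add_left hf g

lemma laverage_const_mul {c : ℝ≥0∞} (hc : c ≠ ∞) (f : X → ℝ≥0∞) :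
    ⨍⁻ x, c * f x ∂μ = c * ⨍⁻ x, f x ∂μ :=
  lintegral_const_mul' c f hc

lemma laverage_le_of_forall_le {c : ℝ≥0∞} (h : ∀ x, f x ≤ c) : ⨍⁻ x, f x ∂μ ≤ c := by
  calc ⨍⁻ x, f x ∂μ ≤ ⨍⁻ _, c ∂μ := laverage_mono_ae (.of_forall h)
    _ = c * ((μ univ)⁻¹ * μ univ) := by rw [laverage, lintegral_const, Measure.smul_apply,
        smul_eq_mul]
    _ ≤ c := mul_le_of_le_one_right' (ENNReal.inv_mul_le_one _)

lemma laverage_rpow_le (hf : Measurable f) {s : ℝ} (hs : 1 ≤ s) :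
    (⨍⁻ x, f x ∂μ) ^ s ≤ ⨍⁻ x, f x ^ s ∂μ := by
  set ν := (μ univ)⁻¹ • μ
  have hν1 : ν univ ≤ 1 := ENNReal.inv_mul_le_one _
  have h : eLpNorm' f 1 ν ≤ eLpNorm' f s ν :=
    (eLpNorm'_le_eLpNorm'_mul_rpow_measure_univ one_pos hs hf.aestronglyMeasurable).trans
      (mul_le_of_le_one_right' (ENNReal.rpow_le_one hν1
        (sub_nonneg.2 (one_div_le_one_div_of_le one_pos hs))))
  simp only [eLpNorm'_eq_lintegral_enorm, enorm_eq_self, ENNReal.rpow_one, div_one] at h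
  rwa [one_div, ENNReal.le_rpow_inv_iff (zero_lt_one.trans_le hs)] at h

end Average

section LayerCake

variable {X : Type*} [MeasurableSpace X] {μ : Measure X} {f g : X → ℝ≥0∞} {σ : ℝ}

lemma setLIntegral_Ioo_mul_rpow_sub_one (hσ : 0 < σ) {c : ℝ} (hc : 0 ≤ c) :
    ∫⁻ t in Ioo 0 c, ENNReal.ofReal (σ * t ^ (σ - 1)) = ENNReal.ofReal c ^ σ := by
  rw [restrict_Ioo_eq_restrict_Ioc, ← ofReal_integral_eq_lintegral_ofReal
      ((intervalIntegral.intervalIntegrable_rpow' (by linarith)).1.const_mul σ),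
    ← intervalIntegral.integral_of_le hc, intervalIntegral.integral_const_mul,
    integral_rpow (Or.inl (by linarith)), ENNReal.ofReal_rpow_of_nonneg hc hσ.le, sub_add_cancel,
    Real.zero_rpow hσ.ne', sub_zero, mul_div_cancel₀ _ hσ.ne']
  filter_upwards [ae_restrict_mem measurableSet_Ioc] with t ht
  have : 0 < t := ht.1
  positivity

lemma setLIntegral_Ioi_mul_rpow_sub_one (hσ : 0 < σ) :
    ∫⁻ t in Ioi (0 : ℝ), ENNReal.ofReal (σ * t ^ (σ - 1)) = ∞ := by
  refine ENNReal.eq_top_of_forall_nnreal_le fun N => ?_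
  have h := setLIntegral_Ioo_mul_rpow_sub_one hσ (c := (N : ℝ) ^ σ⁻¹) (by positivity)
  rw [ENNReal.ofReal_rpow_of_nonneg (by positivity) hσ.le, ← Real.rpow_mul N.coe_nonneg,
    inv_mul_cancel₀ hσ.ne', Real.rpow_one, ENNReal.ofReal_coe_nnreal] at h
  exact h.ge.trans (lintegral_mono_set Ioo_subset_Ioi_self)

lemma setLIntegral_Ioi_indicator_ofReal_lt (hσ : 0 < σ) (a : ℝ≥0∞) :
    ∫⁻ t in Ioi (0 : ℝ), {t : ℝ | ENNReal.ofReal t < a}.indicator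
      (fun t => ENNReal.ofReal (σ * t ^ (σ - 1))) t = a ^ σ := by
  have hm : MeasurableSet {t : ℝ | ENNReal.ofReal t < a} :=
    measurableSet_lt ENNReal.measurable_ofReal measurable_const
  rw [setLIntegral_indicator hm]
  rcases eq_or_ne a ∞ with rfl | ha
  · simp only [ENNReal.ofReal_lt_top, ofPred_true, univ_inter, ENNReal.top_rpow_of_pos hσ,
      setLIntegral_Ioi_mul_rpow_sub_one hσ]
  · lift a to NNReal using ha
    have hIoo : {t : ℝ | ENNReal.ofReal t < a} ∩ Ioi 0 = Ioo 0 (a : ℝ) := by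
      ext t
      rw [mem_inter_iff, and_comm]
      refine and_congr_right fun ht : 0 < t => ?_
      rw [mem_ofPred_eq, ← ENNReal.ofReal_coe_nnreal, ENNReal.ofReal_lt_ofReal_iff_of_nonneg ht.le]
    rw [hIoo, setLIntegral_Ioo_mul_rpow_sub_one hσ a.coe_nonneg, ENNReal.ofReal_coe_nnreal]

theorem lintegral_mul_rpow_eq_lintegral_setLIntegral_lt [SFinite μ] (hf : Measurable f)
    (hg : Measurable g) (hσ : 0 < σ) :
    ∫⁻ x, g x * f x ^ σ ∂μ = ∫⁻ t in Ioi (0 : ℝ), ENNReal.ofReal (σ * t ^ (σ - 1)) *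
      (∫⁻ x in {x | ENNReal.ofReal t < f x}, g x ∂μ) := by
  have hS : MeasurableSet {q : X × ℝ | ENNReal.ofReal q.2 < f q.1} :=
    measurableSet_lt (by fun_prop) (hf.comp measurable_fst)
  have hm : Measurable fun q : X × ℝ => g q.1 * {q : X × ℝ | ENNReal.ofReal q.2 < f q.1}.indicator
      (fun q => ENNReal.ofReal (σ * q.2 ^ (σ - 1))) q :=
    (hg.comp measurable_fst).mul (Measurable.indicator (by fun_prop) hS)
  calc ∫⁻ x, g x * f x ^ σ ∂μ
      = ∫⁻ x, (∫⁻ t in Ioi (0 : ℝ), g x * {t : ℝ | ENNReal.ofReal t < f x}.indicator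
          (fun t => ENNReal.ofReal (σ * t ^ (σ - 1))) t) ∂μ := by
        refine lintegral_congr fun x => ?_
        rw [← setLIntegral_Ioi_indicator_ofReal_lt hσ, lintegral_const_mul]
        exact Measurable.indicator (by fun_prop)
          (measurableSet_lt ENNReal.measurable_ofReal measurable_const)
    _ = ∫⁻ t in Ioi (0 : ℝ), ∫⁻ x, g x * {t : ℝ | ENNReal.ofReal t < f x}.indicator
          (fun t => ENNReal.ofReal (σ * t ^ (σ - 1))) t ∂μ :=
        lintegral_lintegral_swap hm.aemeasurable
    _ = _ := by
        refine lintegral_congr fun t => ?_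
        rw [← lintegral_indicator (measurableSet_lt measurable_const hf),
          ← lintegral_const_mul' _ _ ENNReal.ofReal_ne_top]
        refine lintegral_congr fun x => ?_
        by_cases hx : ENNReal.ofReal t < f x <;> simp [indicator, hx, mul_comm]

theorem lintegral_rpow_le_of_weak_type [SFinite μ] (hf : Measurable f) (hg : Measurable g)
    (hσ : 1 < σ) {A c : ℝ≥0∞} (hA : A ≠ ∞)
    (h : ∀ t : ℝ, 0 < t → ENNReal.ofReal t * μ {x | ENNReal.ofReal t < f x} ≤
      A * ∫⁻ x in {x | ENNReal.ofReal t < c * g x}, g x ∂μ) :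
    ∫⁻ x, f x ^ σ ∂μ ≤
      ENNReal.ofReal (σ / (σ - 1)) * A * c ^ (σ - 1) * ∫⁻ x, g x ^ σ ∂μ := by
  have hσ0 : 0 < σ := one_pos.trans hσ
  have hσ1 : 0 < σ - 1 := sub_pos.2 hσ
  have hdensity : ∀ t : ℝ, 0 < t → ENNReal.ofReal (σ * t ^ (σ - 1)) =
      ENNReal.ofReal (σ / (σ - 1)) * ENNReal.ofReal ((σ - 1) * t ^ (σ - 1 - 1)) *
        ENNReal.ofReal t := by
    intro t ht
    rw [← ENNReal.ofReal_mul (by positivity), ← ENNReal.ofReal_mul (by positivity),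
      Real.rpow_sub_one ht.ne' (σ - 1)]
    field_simp
  calc ∫⁻ x, f x ^ σ ∂μ
      = ∫⁻ t in Ioi (0 : ℝ), ENNReal.ofReal (σ * t ^ (σ - 1)) *
          μ {x | ENNReal.ofReal t < f x} := by
        simpa only [Pi.one_apply, one_mul, lintegral_one, Measure.restrict_apply_univ] using
          lintegral_mul_rpow_eq_lintegral_setLIntegral_lt (μ := μ) hf measurable_one hσ0
    _ ≤ ∫⁻ t in Ioi (0 : ℝ), ENNReal.ofReal (σ / (σ - 1)) * A *
          (ENNReal.ofReal ((σ - 1) * t ^ (σ - 1 - 1)) *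
            ∫⁻ x in {x | ENNReal.ofReal t < c * g x}, g x ∂μ) := by
        refine setLIntegral_mono' measurableSet_Ioi fun t ht => ?_
        rw [hdensity t ht, mul_assoc]
        refine (mul_le_mul_right (h t ht) _).trans_eq ?_
        ring
    _ = ENNReal.ofReal (σ / (σ - 1)) * A * ∫⁻ x, g x * (c * g x) ^ (σ - 1) ∂μ := by
        rw [lintegral_const_mul' _ _ (by finiteness),
          ← lintegral_mul_rpow_eq_lintegral_setLIntegral_lt (hg.const_mul c) hg hσ1]
    _ = _ := by
        rw [mul_assoc _ (c ^ (σ - 1)), ← lintegral_const_mul _ (hg.pow_const _)]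
        congr 2 with x
        rw [ENNReal.mul_rpow_of_nonneg _ _ hσ1.le, mul_left_comm]
        congr 1
        simpa only [ENNReal.rpow_one, add_sub_cancel] using
          (ENNReal.rpow_add_of_nonneg (x := g x) 1 (σ - 1) zero_le_one hσ1.le).symm

end LayerCake

section Maximal

open Metric

variable {E : Type*} [NormedAddCommGroup E] [MeasurableSpace E] {μ : Measure E} {F G : E → ℝ≥0∞}

/-- The centred Hardy–Littlewood maximal function. Only dyadic radii are used, which keeps it a
countable supremum; this costs at most a factor `2 ^ d` in dimension `d`. -/
def maxFn (μ : Measure E) (F : E → ℝ≥0∞) (x : E) : ℝ≥0∞ :=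
  ⨆ k : ℤ, ⨍⁻ y in closedBall x (2 ^ k), F y ∂μ

lemma laverage_closedBall_le_maxFn (μ : Measure E) (F : E → ℝ≥0∞) (x : E) (k : ℤ) :
    ⨍⁻ y in closedBall x (2 ^ k), F y ∂μ ≤ maxFn μ F x :=
  le_iSup (fun k : ℤ => ⨍⁻ y in closedBall x (2 ^ k), F y ∂μ) k

lemma maxFn_mono (h : F ≤ G) (x : E) : maxFn μ F x ≤ maxFn μ G x :=
  iSup_mono fun _ => laverage_mono_ae (.of_forall h)

lemma maxFn_le_of_forall_le {c : ℝ≥0∞} (h : ∀ y, F y ≤ c) (x : E) : maxFn μ F x ≤ c :=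
  iSup_le fun _ => laverage_le_of_forall_le h

lemma maxFn_add_le (hF : Measurable F) (G : E → ℝ≥0∞) (x : E) :
    maxFn μ (fun y => F y + G y) x ≤ maxFn μ F x + maxFn μ G x := by
  refine iSup_le fun k => ?_
  rw [laverage_add_left hF]
  exact add_le_add (laverage_closedBall_le_maxFn μ F x k) (laverage_closedBall_le_maxFn μ G x k)

lemma maxFn_const_mul {c : ℝ≥0∞} (hc : c ≠ ∞) (F : E → ℝ≥0∞) (x : E) :
    maxFn μ (fun y => c * F y) x = c * maxFn μ F x := by
  simp only [maxFn, laverage_const_mul hc, ENNReal.mul_iSup]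

lemma maxFn_rpow_le_of_forall {s : ℝ} (hs : 0 < s) {x : E} {c : ℝ≥0∞}
    (h : ∀ k : ℤ, (⨍⁻ y in closedBall x (2 ^ k), F y ∂μ) ^ s ≤ c) : maxFn μ F x ^ s ≤ c := by
  rw [← ENNReal.le_rpow_inv_iff hs]
  exact iSup_le fun k => (ENNReal.le_rpow_inv_iff hs).2 (h k)

lemma maxFn_rpow_le (hF : Measurable F) {s : ℝ} (hs : 1 ≤ s) (x : E) :
    maxFn μ F x ^ s ≤ maxFn μ (fun y => F y ^ s) x :=
  maxFn_rpow_le_of_forall (by linarith) fun k =>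
    (laverage_rpow_le hF hs).trans (laverage_closedBall_le_maxFn μ _ x k)

variable [NormedSpace ℝ E] [FiniteDimensional ℝ E] [μ.IsAddHaarMeasure]

lemma setLIntegral_closedBall_le_maxFn (μ : Measure E) [μ.IsAddHaarMeasure] (F : E → ℝ≥0∞) (x : E)
    {ρ : ℝ} (hρ : 0 < ρ) :
    ∫⁻ y in closedBall x ρ, F y ∂μ ≤ μ (closedBall x (2 * ρ)) * maxFn μ F x := by
  obtain ⟨k, hk, hk'⟩ := exists_mem_Ioc_zpow hρ (one_lt_two : (1 : ℝ) < 2)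
  have hk2 : (2 : ℝ) ^ (k + 1) ≤ 2 * ρ := by
    rw [zpow_add_one₀ two_ne_zero]; linarith
  calc ∫⁻ y in closedBall x ρ, F y ∂μ ≤ ∫⁻ y in closedBall x (2 ^ (k + 1)), F y ∂μ :=
        lintegral_mono_set (closedBall_subset_closedBall hk')
    _ = μ (closedBall x (2 ^ (k + 1))) * ⨍⁻ y in closedBall x (2 ^ (k + 1)), F y ∂μ :=
        (measure_mul_setLAverage F measure_closedBall_lt_top.ne).symm
    _ ≤ μ (closedBall x (2 * ρ)) * maxFn μ F x := by
        gcongr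
        exact laverage_closedBall_le_maxFn μ F x (k + 1)

variable [BorelSpace E]

lemma measurable_setLIntegral_closedBall (hF : Measurable F) (ρ : ℝ) :
    Measurable fun x => ∫⁻ y in closedBall x ρ, F y ∂μ := by
  have hs : MeasurableSet {q : E × E | dist q.2 q.1 ≤ ρ} :=
    measurableSet_le (by fun_prop) measurable_const
  have h := ((hF.comp measurable_snd).indicator hs).lintegral_prod_right' (ν := μ)
  convert h using 2 with x
  rw [← lintegral_indicator measurableSet_closedBall]
  rfl

lemma measurable_maxFn (hF : Measurable F) : Measurable (maxFn μ F) := by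
  refine Measurable.iSup fun k => ?_
  simp only [setLAverage_eq, Measure.addHaar_closedBall_center]
  exact (measurable_setLIntegral_closedBall hF _).div_const _

lemma measure_closedBall_mul (μ : Measure E) [μ.IsAddHaarMeasure] (x : E) {a ρ : ℝ} (ha : 0 ≤ a)
    (hρ : 0 ≤ ρ) :
    μ (closedBall x (a * ρ)) =
      ENNReal.ofReal (a ^ Module.finrank ℝ E) * μ (closedBall x ρ) := by
  rw [Measure.addHaar_closedBall_mul μ x ha hρ, ← Measure.addHaar_closedBall_center μ x ρ]

theorem mul_measure_le_of_forall_mem_closedBall {S : Set E} {r : E → ℝ} {R : ℝ} {t : ℝ≥0∞}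
    (hr : ∀ x ∈ S, 0 < r x) (hR : ∀ x ∈ S, r x ≤ R)
    (hF : ∀ x ∈ S, t * μ (closedBall x (r x)) ≤ ∫⁻ y in closedBall x (r x), F y ∂μ) :
    t * μ S ≤ 5 ^ Module.finrank ℝ E * ∫⁻ y, F y ∂μ := by
  obtain ⟨u, huS, hdisj, hcov⟩ := Vitali.exists_disjoint_subfamily_covering_enlargement_closedBall
    S (fun x : E => x) r R hR 5 (by norm_num)
  have hcount : u.Countable := hdisj.countable_of_nonempty_interior fun x hx =>
    ⟨x, mem_interior_iff_mem_nhds.2 (closedBall_mem_nhds x (hr x (huS hx)))⟩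
  have hsub : S ⊆ ⋃ x ∈ u, closedBall x (5 * r x) := by
    intro x hx
    obtain ⟨y, hy, hxy⟩ := hcov x hx
    exact mem_iUnion₂.2 ⟨y, hy, hxy (mem_closedBall_self (hr x hx).le)⟩
  calc t * μ S ≤ t * ∑' x : u, μ (closedBall (x : E) (5 * r x)) := by
        gcongr
        exact (measure_mono hsub).trans (measure_biUnion_le _ hcount _)
    _ = ∑' x : u, 5 ^ Module.finrank ℝ E * (t * μ (closedBall (x : E) (r x))) := by
        rw [← ENNReal.tsum_mul_left]
        congr 1 with x
        rw [measure_closedBall_mul μ _ (by norm_num) (hr x (huS x.2)).le,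
          ENNReal.ofReal_pow (by norm_num), ENNReal.ofReal_ofNat, mul_left_comm]
    _ ≤ ∑' x : u, 5 ^ Module.finrank ℝ E * ∫⁻ y in closedBall (x : E) (r x), F y ∂μ := by
        gcongr with x
        exact hF x (huS x.2)
    _ = 5 ^ Module.finrank ℝ E * ∫⁻ y in ⋃ x ∈ u, closedBall x (r x), F y ∂μ := by
        rw [ENNReal.tsum_mul_left, lintegral_biUnion hcount (fun _ _ => measurableSet_closedBall)
          hdisj]
    _ ≤ 5 ^ Module.finrank ℝ E * ∫⁻ y, F y ∂μ := by
        exact mul_le_mul_right (setLIntegral_le_lintegral _ _) _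

variable [Nontrivial E]

lemma exists_forall_measure_closedBall_le_imp_le (μ : Measure E) [μ.IsAddHaarMeasure] {c : ℝ≥0∞}
    (hc : c ≠ ∞) :
    ∃ R : ℝ, ∀ (x : E) (ρ : ℝ), μ (closedBall x ρ) ≤ c → ρ ≤ R := by
  set v := μ (ball (0 : E) 1)
  have hv0 : v ≠ 0 := (measure_ball_pos _ _ one_pos).ne'
  have hcv : c / v ≠ ∞ := ENNReal.div_ne_top hc hv0
  refine ⟨max 1 (c / v).toReal, fun x ρ h => ?_⟩
  rcases le_total ρ 1 with hρ | hρ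
  · exact hρ.trans (le_max_left _ _)
  refine le_max_of_le_right ((ENNReal.ofReal_le_iff_le_toReal hcv).1 ?_)
  rw [ENNReal.le_div_iff_mul_le (Or.inl hv0) (Or.inl measure_ball_lt_top.ne)]
  refine le_trans ?_ h
  rw [Measure.addHaar_closedBall μ x (by linarith)]
  gcongr
  exact le_self_pow₀ hρ Module.finrank_pos.ne'

theorem mul_measure_lt_maxFn_le (F : E → ℝ≥0∞) {t : ℝ≥0∞} (ht0 : t ≠ 0) (ht : t ≠ ∞) :
    t * μ {x | t < maxFn μ F x} ≤ 5 ^ Module.finrank ℝ E * ∫⁻ y, F y ∂μ := by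
  rcases eq_or_ne (∫⁻ y, F y ∂μ) ∞ with hF | hF
  · simp [hF, ENNReal.mul_top]
  have hball : ∀ x, t < maxFn μ F x → ∃ k : ℤ,
      t * μ (closedBall x (2 ^ k)) ≤ ∫⁻ y in closedBall x (2 ^ k), F y ∂μ := by
    intro x hx
    obtain ⟨k, hk⟩ := lt_iSup_iff.1 hx
    refine ⟨k, ?_⟩
    rw [← measure_mul_setLAverage F measure_closedBall_lt_top.ne, mul_comm]
    gcongr
  choose! k hk using hball
  obtain ⟨R, hR⟩ := exists_forall_measure_closedBall_le_imp_le μ (ENNReal.div_ne_top hF ht0)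
  refine mul_measure_le_of_forall_mem_closedBall (fun x _ => by positivity)
    (fun x hx => hR x (2 ^ k x) ?_) hk
  rw [ENNReal.le_div_iff_mul_le (Or.inl ht0) (Or.inl ht), mul_comm]
  exact (hk x hx).trans (setLIntegral_le_lintegral _ _)

lemma ofReal_mul_measure_lt_maxFn_le (hF : Measurable F) {t : ℝ} (ht : 0 < t) :
    ENNReal.ofReal t * μ {x | ENNReal.ofReal t < maxFn μ F x} ≤
      2 * 5 ^ Module.finrank ℝ E * ∫⁻ y in {y | ENNReal.ofReal t < 2 * F y}, F y ∂μ := by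
  set s := ENNReal.ofReal (t / 2) with hs
  have hts : ENNReal.ofReal t = 2 * s := by
    rw [hs, ← ENNReal.ofReal_ofNat, ← ENNReal.ofReal_mul (by norm_num)]; congr 1; ring
  set f := {y | ENNReal.ofReal t < 2 * F y}.indicator F with hf
  have hle : F ≤ fun y => s + f y := by
    intro y
    by_cases hy : ENNReal.ofReal t < 2 * F y
    · simp only [hf, indicator_of_mem (show y ∈ {y | ENNReal.ofReal t < 2 * F y} from hy)]
      exact le_add_self
    · rw [not_lt, hts] at hy
      exact le_add_right ((ENNReal.mul_le_mul_iff_right two_ne_zero (by norm_num)).1 hy)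
  have hsub : {x | ENNReal.ofReal t < maxFn μ F x} ⊆ {x | s < maxFn μ f x} := by
    intro x hx
    have h := lt_of_lt_of_le hx ((maxFn_mono hle x).trans ((maxFn_add_le measurable_const f x).trans
      (add_le_add_left (maxFn_le_of_forall_le (fun _ => le_rfl) x) _)))
    rw [hts, two_mul] at h
    exact lt_of_add_lt_add_left h
  calc ENNReal.ofReal t * μ {x | ENNReal.ofReal t < maxFn μ F x}
      ≤ 2 * (s * μ {x | s < maxFn μ f x}) := by rw [← mul_assoc, ← hts]; gcongr
    _ ≤ 2 * (5 ^ Module.finrank ℝ E * ∫⁻ y, f y ∂μ) := by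
        exact mul_le_mul_right
          (mul_measure_lt_maxFn_le f (by simpa [hs] using ht) ENNReal.ofReal_ne_top) _
    _ = _ := by
        rw [hf, lintegral_indicator (measurableSet_lt measurable_const (hF.const_mul 2)),
          mul_assoc]

theorem exists_lintegral_maxFn_rpow_le (μ : Measure E) [μ.IsAddHaarMeasure] {σ : ℝ} (hσ : 1 < σ) :
    ∃ K : ℝ≥0∞, K ≠ ∞ ∧ ∀ F : E → ℝ≥0∞, Measurable F →
      ∫⁻ x, maxFn μ F x ^ σ ∂μ ≤ K * ∫⁻ x, F x ^ σ ∂μ := by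
  refine ⟨ENNReal.ofReal (σ / (σ - 1)) * (2 * 5 ^ Module.finrank ℝ E) * 2 ^ (σ - 1),
    ENNReal.mul_ne_top (by finiteness) (by finiteness), fun F hF => ?_⟩
  exact lintegral_rpow_le_of_weak_type (measurable_maxFn hF) hF hσ (by finiteness)
    fun t ht => ofReal_mul_measure_lt_maxFn_le hF ht

end Maximal

/-! ### The maximal function on variable exponent spaces -/

section LogHolder

variable {E : Type*} [NormedAddCommGroup E] {g : E → ℝ} {C l : ℝ}

/-- The local log-Hölder condition with constant `C`; for an exponent `p(·)` it is imposed on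
`1 / p(·)`. -/
def LocLogHolderWith (C : ℝ) (g : E → ℝ) : Prop :=
  ∀ x y, x ≠ y → |g x - g y| ≤ C / Real.log (Real.exp 1 + 1 / ‖x - y‖)

/-- The log-Hölder decay condition with constant `C` and limit `l` at infinity; for an exponent
`p(·)` it is imposed on `1 / p(·)`, so that `l` plays the role of `1 / p_∞`. -/
def LogHolderDecayWith (C l : ℝ) (g : E → ℝ) : Prop :=
  ∀ x, |g x - l| ≤ C / Real.log (Real.exp 1 + ‖x‖)

lemma one_le_log_exp_one_add {t : ℝ} (ht : 0 ≤ t) : 1 ≤ Real.log (Real.exp 1 + t) := by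
  rw [Real.le_log_iff_exp_le (by positivity)]
  linarith

lemma LocLogHolderWith.one_div_div {p : E → ℝ} (h : LocLogHolderWith C fun x => 1 / p x) {a : ℝ}
    (ha : 0 ≤ a) : LocLogHolderWith (a * C) fun x => 1 / (p x / a) := fun x y hxy => by
  simp only [_root_.one_div_div, ← mul_one_div a, ← mul_sub, abs_mul, abs_of_nonneg ha,
    mul_div_assoc]
  exact mul_le_mul_of_nonneg_left (h x y hxy) ha

lemma LocLogHolderWith.le_add_of_mem_closedBall (h : LocLogHolderWith C g) (hC : 0 ≤ C) {x y : E}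
    {ρ : ℝ} (hρ : 0 < ρ) (hy : y ∈ Metric.closedBall x ρ) :
    g y ≤ g x + C / Real.log (Real.exp 1 + 1 / ρ) := by
  have hL := one_le_log_exp_one_add (t := 1 / ρ) (by positivity)
  rcases eq_or_ne y x with rfl | hyx
  · exact le_add_of_nonneg_right (by positivity)
  have h0 : 0 < ‖y - x‖ := norm_pos_iff.2 (sub_ne_zero.2 hyx)
  have hle : ‖y - x‖ ≤ ρ := mem_closedBall_iff_norm.1 hy
  calc g y ≤ g x + C / Real.log (Real.exp 1 + 1 / ‖y - x‖) := by
        linarith [le_abs_self (g y - g x), h y x hyx]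
    _ ≤ g x + C / Real.log (Real.exp 1 + 1 / ρ) := by gcongr

lemma LocLogHolderWith.continuous (h : LocLogHolderWith C g) : Continuous g := by
  refine continuous_iff_continuousAt.2 fun x => continuousAt_iff_punctured_nhds.2 ?_
  have hmod : Tendsto (fun y => C / Real.log (Real.exp 1 + 1 / ‖y - x‖)) (𝓝[≠] x) (𝓝 0) := by
    refine Tendsto.const_div_atTop (Real.tendsto_log_atTop.comp
      (tendsto_atTop_add_const_left _ _ ?_)) C
    simp only [one_div]
    exact (tendsto_norm_sub_self_nhdsNE x).inv_tendsto_nhdsGT_zero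
  refine tendsto_iff_dist_tendsto_zero.2 (squeeze_zero' (.of_forall fun _ => dist_nonneg) ?_ hmod)
  filter_upwards [self_mem_nhdsWithin] with y hy using h y x hy

lemma LocLogHolderWith.continuous_of_one_div {p : E → ℝ} (h : LocLogHolderWith C fun x => 1 / p x)
    (hp : ∀ x, 0 < p x) : Continuous p := by
  have hinv : p = fun x => 1 / (1 / p x) := funext fun x => (one_div_one_div (p x)).symm
  rw [hinv]
  exact continuous_const.div h.continuous fun x => (one_div_pos.2 (hp x)).ne'

lemma LogHolderDecayWith.one_div_div {p : E → ℝ} (h : LogHolderDecayWith C l fun x => 1 / p x)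
    {a : ℝ} (ha : 0 ≤ a) : LogHolderDecayWith (a * C) (a * l) fun x => 1 / (p x / a) := fun x => by
  simp only [_root_.one_div_div, ← mul_one_div a, ← mul_sub, abs_mul, abs_of_nonneg ha,
    mul_div_assoc]
  exact mul_le_mul_of_nonneg_left (h x) ha

lemma LogHolderDecayWith.tendsto [ProperSpace E] (h : LogHolderDecayWith C l g) :
    Tendsto g (cocompact E) (𝓝 l) := by
  have hmod : Tendsto (fun x : E => C / Real.log (Real.exp 1 + ‖x‖)) (cocompact E) (𝓝 0) :=
    Tendsto.const_div_atTop (Real.tendsto_log_atTop.comp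
      (tendsto_atTop_add_const_left _ _ tendsto_norm_cocompact_atTop)) C
  exact tendsto_iff_dist_tendsto_zero.2 (squeeze_zero (fun _ => dist_nonneg) h hmod)

lemma LogHolderDecayWith.abs_sub_mul_log_le {q : E → ℝ} {Q m : ℝ}
    (h : LogHolderDecayWith C (1 / m) fun x => 1 / q x) (hm : 1 ≤ m) (hmQ : m ≤ Q) {x : E}
    (hq : 1 ≤ q x) (hqQ : q x ≤ Q) :
    |q x - m| * Real.log (Real.exp 1 + ‖x‖) ≤ Q * Q * C := by
  have hL := one_le_log_exp_one_add (norm_nonneg x)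
  have hQ : 0 ≤ Q := by linarith
  have heq : |q x - m| = q x * m * |1 / q x - 1 / m| := by
    rw [abs_sub_comm, ← abs_of_nonneg (by positivity : 0 ≤ q x * m), ← abs_mul]
    congr 1
    field_simp
  rw [heq, mul_assoc]
  gcongr
  exact (le_div_iff₀ (by linarith)).1 (h x)

end LogHolder

section LargeValues

open Metric

lemma exists_one_le_forall_le_and_div_le {a δ : ℝ} (ha : 1 ≤ a) (hδ : 0 ≤ δ) :
    ∃ s, 1 ≤ s ∧ (∀ b, 1 ≤ b → 1 / b ≤ 1 / a + δ → s ≤ b) ∧ a / s ≤ 1 + a * δ := by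
  have hd : 0 < 1 / a + δ := by positivity
  have hs : 1 ≤ max 1 (1 / (1 / a + δ)) := le_max_left _ _
  refine ⟨max 1 (1 / (1 / a + δ)), hs, fun b hb h => ?_, ?_⟩
  · exact max_le hb ((one_div_le hd (by linarith)).2 h)
  · have h : 1 / max 1 (1 / (1 / a + δ)) ≤ 1 / a + δ :=
      (one_div_le (by linarith) hd).2 (le_max_right _ _)
    calc a / max 1 (1 / (1 / a + δ)) = a * (1 / max 1 (1 / (1 / a + δ))) := by ring
      _ ≤ a * (1 / a + δ) := by gcongr
      _ = 1 + a * δ := by field_simp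

lemma laverage_rpow_le_laverage_rpow {X : Type*} [MeasurableSpace X] {μ : Measure X}
    {f : X → ℝ≥0∞} (hf : Measurable f) {q : X → ℝ} {s : ℝ}
    (hs : 1 ≤ s) (hf1 : ∀ y, f y = 0 ∨ 1 ≤ f y) (hsq : ∀ᵐ y ∂μ, s ≤ q y) :
    (⨍⁻ y, f y ∂μ) ^ s ≤ ⨍⁻ y, f y ^ q y ∂μ := by
  refine (laverage_rpow_le hf hs).trans (laverage_mono_ae ?_)
  filter_upwards [hsq] with y hy
  rcases hf1 y with h0 | h1
  · simp only [h0, ENNReal.zero_rpow_of_pos (zero_lt_one.trans_le hs), zero_le]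
  · exact ENNReal.rpow_le_rpow_of_exponent_le h1 hy

lemma rpow_one_add_le_exp_mul {A : ℝ≥0∞} {B ε c : ℝ} (hA : A ≤ ENNReal.ofReal (Real.exp B))
    (hε : 0 ≤ ε) (hc : B * ε ≤ c) :
    A ^ (1 + ε) ≤ ENNReal.ofReal (Real.exp c) * A := by
  rw [add_comm, ENNReal.rpow_add_of_nonneg _ _ hε zero_le_one, ENNReal.rpow_one]
  gcongr
  calc A ^ ε ≤ ENNReal.ofReal (Real.exp B) ^ ε := by gcongr
    _ = ENNReal.ofReal (Real.exp (B * ε)) := by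
        rw [ENNReal.ofReal_rpow_of_pos (Real.exp_pos _), Real.exp_mul]
    _ ≤ ENNReal.ofReal (Real.exp c) := by gcongr

variable {E : Type*} [NormedAddCommGroup E] [NormedSpace ℝ E] [FiniteDimensional ℝ E]
  [MeasurableSpace E] [BorelSpace E]

lemma exists_inv_measure_closedBall_le (μ : Measure E) [μ.IsAddHaarMeasure] :
    ∃ c : ℝ, 0 ≤ c ∧ ∀ (x : E) (ρ : ℝ), 0 < ρ →
      (μ (closedBall x ρ))⁻¹ ≤ ENNReal.ofReal (Real.exp (c * Real.log (Real.exp 1 + 1 / ρ))) := by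
  set d := Module.finrank ℝ E
  obtain ⟨w, hw, hvw⟩ : ∃ w : ℝ, 0 < w ∧ μ (ball (0 : E) 1) = ENNReal.ofReal w :=
    ⟨_, ENNReal.toReal_pos (measure_ball_pos _ _ one_pos).ne' measure_ball_lt_top.ne,
      (ENNReal.ofReal_toReal measure_ball_lt_top.ne).symm⟩
  refine ⟨|Real.log w| + d, by positivity, fun x ρ hρ => ?_⟩
  set L := Real.log (Real.exp 1 + 1 / ρ) with hL
  have hL1 : 1 ≤ L := one_le_log_exp_one_add (by positivity)
  have hρL : ρ⁻¹ ≤ Real.exp L := by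
    rw [hL, Real.exp_log (by positivity), ← one_div]
    exact le_add_of_nonneg_left (Real.exp_nonneg 1)
  have hwL : w⁻¹ ≤ Real.exp (|Real.log w| * L) := by
    rw [← Real.exp_log hw, ← Real.exp_neg, Real.log_exp]
    gcongr
    exact (neg_le_abs _).trans (le_mul_of_one_le_right (abs_nonneg _) hL1)
  rw [Measure.addHaar_closedBall μ x hρ.le, hvw, ← ENNReal.ofReal_mul (by positivity),
    ← ENNReal.ofReal_inv_of_pos (by positivity), mul_inv_rev, add_mul, Real.exp_add,
    Real.exp_nat_mul, ← inv_pow]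
  gcongr

theorem exists_laverage_rpow_le_of_one_le (μ : Measure E) [μ.IsAddHaarMeasure] {q : E → ℝ}
    {Q C : ℝ} (hq1 : ∀ x, 1 ≤ q x) (hqQ : ∀ x, q x ≤ Q) (hC : 0 ≤ C)
    (hlog : LocLogHolderWith C fun x => 1 / q x) :
    ∃ c : ℝ, ∀ f : E → ℝ≥0∞, Measurable f → (∀ y, f y = 0 ∨ 1 ≤ f y) →
      ∫⁻ y, f y ^ q y ∂μ ≤ 1 → ∀ (x : E) (ρ : ℝ), 0 < ρ →
        (⨍⁻ y in closedBall x ρ, f y ∂μ) ^ q x ≤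
          ENNReal.ofReal (Real.exp c) * ⨍⁻ y in closedBall x ρ, f y ^ q y ∂μ := by
  obtain ⟨c, hc, hvol⟩ := exists_inv_measure_closedBall_le μ
  refine ⟨c * (Q * C), fun f hf hf1 hfin x ρ hρ => ?_⟩
  set L := Real.log (Real.exp 1 + 1 / ρ)
  have hL : 1 ≤ L := one_le_log_exp_one_add (by positivity)
  obtain ⟨s, hs1, hsle, hsdiv⟩ :=
    exists_one_le_forall_le_and_div_le (hq1 x) (by positivity : 0 ≤ C / L)
  have hsq : ∀ y ∈ closedBall x ρ, s ≤ q y := fun y hy =>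
    hsle _ (hq1 y) (hlog.le_add_of_mem_closedBall hC hρ hy)
  have hs0 : 0 < s := by linarith
  have hsx : 1 ≤ q x / s := (one_le_div hs0).2 (hsq x (mem_closedBall_self hρ.le))
  have hA : ⨍⁻ y in closedBall x ρ, f y ^ q y ∂μ ≤ ENNReal.ofReal (Real.exp (c * L)) := by
    rw [setLAverage_eq, div_eq_mul_inv]
    exact (mul_le_of_le_one_left' ((setLIntegral_le_lintegral _ _).trans hfin)).trans (hvol x ρ hρ)
  calc (⨍⁻ y in closedBall x ρ, f y ∂μ) ^ q x
      = ((⨍⁻ y in closedBall x ρ, f y ∂μ) ^ s) ^ (1 + (q x / s - 1)) := by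
        rw [← ENNReal.rpow_mul, add_sub_cancel, mul_div_cancel₀ _ hs0.ne']
    _ ≤ (⨍⁻ y in closedBall x ρ, f y ^ q y ∂μ) ^ (1 + (q x / s - 1)) := by
        gcongr
        exact laverage_rpow_le_laverage_rpow hf hs1 hf1
          ((ae_restrict_iff' measurableSet_closedBall).2 (.of_forall hsq))
    _ ≤ _ := by
        refine rpow_one_add_le_exp_mul hA (by linarith) ?_
        calc c * L * (q x / s - 1) ≤ c * L * (Q * (C / L)) := by
              gcongr
              linarith [mul_le_mul_of_nonneg_right (hqQ x) (by positivity : 0 ≤ C / L)]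
          _ = c * (Q * C) := by field_simp

end LargeValues

section SmallValues

lemma rpow_le_exp_mul_rpow_add_exp_neg {a : ℝ≥0∞} (ha : a ≤ 1) {s r c T : ℝ} (hs : 1 ≤ s)
    (h : |s - r| * T ≤ c) :
    a ^ s ≤ ENNReal.ofReal (Real.exp c) * a ^ r + ENNReal.ofReal (Real.exp (-T)) := by
  rcases le_or_gt a (ENNReal.ofReal (Real.exp (-T))) with haT | haT
  · calc a ^ s ≤ a ^ (1 : ℝ) := ENNReal.rpow_le_rpow_of_exponent_ge ha hs
      _ = a := ENNReal.rpow_one a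
      _ ≤ _ := haT.trans le_add_self
  have ha0 : a ≠ 0 := (zero_le.trans_lt haT).ne'
  have hinv : a⁻¹ ≤ ENNReal.ofReal (Real.exp T) := by
    rw [ENNReal.inv_le_iff_inv_le, ← ENNReal.ofReal_inv_of_pos (Real.exp_pos T), ← Real.exp_neg]
    exact haT.le
  have hpow : a ^ (s - r) ≤ ENNReal.ofReal (Real.exp c) :=
    calc a ^ (s - r) ≤ a ^ (-|s - r|) :=
          ENNReal.rpow_le_rpow_of_exponent_ge ha (neg_abs_le _)
      _ = a⁻¹ ^ |s - r| := by rw [ENNReal.rpow_neg, ENNReal.inv_rpow]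
      _ ≤ ENNReal.ofReal (Real.exp T) ^ |s - r| := by gcongr
      _ = ENNReal.ofReal (Real.exp (|s - r| * T)) := by
          rw [ENNReal.ofReal_rpow_of_pos (Real.exp_pos T), ← Real.exp_mul, mul_comm]
      _ ≤ ENNReal.ofReal (Real.exp c) := by gcongr
  calc a ^ s = a ^ (s - r) * a ^ r := by
        rw [← ENNReal.rpow_add _ _ ha0 (ne_top_of_le_ne_top ENNReal.one_ne_top ha), sub_add_cancel]
    _ ≤ ENNReal.ofReal (Real.exp c) * a ^ r := by gcongr
    _ ≤ _ := le_self_add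

variable {E : Type*} [NormedAddCommGroup E] [NormedSpace ℝ E]

/-- The integrable weight `(1 + ‖x‖) ^ (-(d + 1))` in dimension `d`. It absorbs the error made when
a log-Hölder exponent is replaced by its limit at infinity. -/
def tailWeight (x : E) : ℝ≥0∞ :=
  ENNReal.ofReal ((1 + ‖x‖) ^ (-((Module.finrank ℝ E : ℝ) + 1)))

lemma tailWeight_le_one (x : E) : tailWeight x ≤ 1 :=
  ENNReal.ofReal_le_one.2 (Real.rpow_le_one_of_one_le_of_nonpos
    (le_add_of_nonneg_right (norm_nonneg x)) (neg_nonpos.2 (by positivity)))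

lemma exp_neg_mul_log_le_tailWeight (x : E) :
    ENNReal.ofReal (Real.exp (-((Module.finrank ℝ E + 1) * Real.log (Real.exp 1 + ‖x‖)))) ≤
      tailWeight x := by
  rw [← neg_mul, mul_comm, ← Real.rpow_def_of_pos (by positivity)]
  refine ENNReal.ofReal_le_ofReal (Real.rpow_le_rpow_of_nonpos (by positivity) ?_
    (neg_nonpos.2 (by positivity)))
  linarith [Real.add_one_le_exp 1]

lemma rpow_le_mul_rpow_add_tailWeight {a : ℝ≥0∞} (ha : a ≤ 1) {s r c : ℝ} (hs : 1 ≤ s) {x : E}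
    (h : |s - r| * Real.log (Real.exp 1 + ‖x‖) ≤ c) :
    a ^ s ≤ ENNReal.ofReal (Real.exp ((Module.finrank ℝ E + 1) * c)) *
      (a ^ r + tailWeight x) := by
  have hlog : 0 ≤ Real.log (Real.exp 1 + ‖x‖) :=
    zero_le_one.trans (one_le_log_exp_one_add (norm_nonneg x))
  have hc : 0 ≤ c := le_trans (by positivity) h
  have hT : |s - r| * ((Module.finrank ℝ E + 1) * Real.log (Real.exp 1 + ‖x‖)) ≤
      (Module.finrank ℝ E + 1) * c := by
    rw [mul_left_comm]
    gcongr
  rw [mul_add]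
  refine (rpow_le_exp_mul_rpow_add_exp_neg ha hs hT).trans (add_le_add_right ?_ _)
  exact (exp_neg_mul_log_le_tailWeight x).trans (le_mul_of_one_le_left'
    (ENNReal.one_le_ofReal.2 (Real.one_le_exp (by positivity))))

variable [MeasurableSpace E]

theorem maxFn_rpow_le_of_le_one {μ : Measure E} {f : E → ℝ≥0∞} (hf : Measurable f)
    (hf1 : ∀ y, f y ≤ 1) {q : E → ℝ} (hq : ∀ x, 1 ≤ q x) {m c : ℝ} (hm : 1 ≤ m)
    (hqm : ∀ x, |q x - m| * Real.log (Real.exp 1 + ‖x‖) ≤ c) {K : ℝ≥0∞}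
    (hK : K = ENNReal.ofReal (Real.exp ((Module.finrank ℝ E + 1) * c))) (x : E) :
    maxFn μ f x ^ q x ≤
      K * (K * maxFn μ (fun y => f y ^ q y + tailWeight y) x + tailWeight x) := by
  have hfm : ∀ y, f y ^ m ≤ K * (f y ^ q y + tailWeight y) := fun y =>
    hK ▸ rpow_le_mul_rpow_add_tailWeight (hf1 y) hm (abs_sub_comm m (q y) ▸ hqm y)
  calc maxFn μ f x ^ q x ≤ K * (maxFn μ f x ^ m + tailWeight x) :=
        hK ▸ rpow_le_mul_rpow_add_tailWeight (maxFn_le_of_forall_le hf1 x) (hq x) (hqm x)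
    _ ≤ K * (maxFn μ (fun y => f y ^ m) x + tailWeight x) := by
        gcongr
        exact maxFn_rpow_le hf hm x
    _ ≤ K * (maxFn μ (fun y => K * (f y ^ q y + tailWeight y)) x + tailWeight x) := by
        gcongr
        exact maxFn_mono hfm x
    _ = _ := by rw [maxFn_const_mul (hK ▸ ENNReal.ofReal_ne_top)]

variable [BorelSpace E]

lemma measurable_tailWeight : Measurable (tailWeight : E → ℝ≥0∞) := by
  unfold tailWeight
  fun_prop

lemma lintegral_tailWeight_rpow_ne_top [FiniteDimensional ℝ E] (μ : Measure E) [μ.IsAddHaarMeasure]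
    {σ : ℝ} (hσ : 1 ≤ σ) : ∫⁻ x, tailWeight x ^ σ ∂μ ≠ ∞ := by
  refine ne_top_of_le_ne_top (finite_integral_one_add_norm (μ := μ)
    (lt_add_one (Module.finrank ℝ E : ℝ))).ne (lintegral_mono fun x => ?_)
  calc tailWeight x ^ σ ≤ tailWeight x ^ (1 : ℝ) :=
        ENNReal.rpow_le_rpow_of_exponent_ge (tailWeight_le_one x) hσ
    _ = tailWeight x := ENNReal.rpow_one _

end SmallValues

section VariableExponent

lemma indicator_one_lt_rpow_le {X : Type*} {F : X → ℝ≥0∞} {q : X → ℝ} (hq : ∀ y, 0 < q y) {σ : ℝ}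
    (hσ : 1 ≤ σ) (y : X) : {y | 1 < F y}.indicator F y ^ q y ≤ (F y ^ q y) ^ σ := by
  by_cases hy : 1 < F y
  · rw [indicator_of_mem (show y ∈ {y | 1 < F y} from hy)]
    exact ENNReal.le_rpow_self_of_one_le (ENNReal.one_le_rpow hy.le (hq y)) hσ
  · rw [indicator_of_notMem (show y ∉ {y | 1 < F y} from hy), ENNReal.zero_rpow_of_pos (hq y)]
    exact zero_le

lemma lintegral_add_rpow_le {X : Type*} [MeasurableSpace X] {μ : Measure X} (f : X → ℝ≥0∞)
    {g : X → ℝ≥0∞} (hg : Measurable g) {s : ℝ} (hs : 1 ≤ s) :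
    ∫⁻ x, (f x + g x) ^ s ∂μ ≤ 2 ^ (s - 1) * (∫⁻ x, f x ^ s ∂μ + ∫⁻ x, g x ^ s ∂μ) := by
  rw [← lintegral_add_right _ (hg.pow_const s), ← lintegral_const_mul' _ _
    (ENNReal.rpow_ne_top_of_nonneg (by linarith) ENNReal.ofNat_ne_top)]
  exact lintegral_mono fun x => ENNReal.rpow_add_le_mul_rpow_add_rpow _ _ hs

variable {E : Type*} [NormedAddCommGroup E] [NormedSpace ℝ E] [FiniteDimensional ℝ E]
  [MeasurableSpace E] [BorelSpace E] (μ : Measure E) [μ.IsAddHaarMeasure]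

theorem exists_maxFn_indicator_one_lt_rpow_le {q : E → ℝ} {Q C : ℝ} (hq1 : ∀ x, 1 ≤ q x)
    (hqQ : ∀ x, q x ≤ Q) (hC : 0 ≤ C) (hlog : LocLogHolderWith C fun x => 1 / q x) {σ : ℝ}
    (hσ : 1 ≤ σ) :
    ∃ K ≠ ∞, ∀ F : E → ℝ≥0∞, Measurable F → ∫⁻ y, (F y ^ q y) ^ σ ∂μ ≤ 1 → ∀ x,
      maxFn μ ({y | 1 < F y}.indicator F) x ^ q x ≤ K * maxFn μ (fun y => F y ^ q y) x := by
  obtain ⟨c, hc⟩ := exists_laverage_rpow_le_of_one_le μ hq1 hqQ hC hlog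
  refine ⟨ENNReal.ofReal (Real.exp c), by finiteness, fun F hF hfin x => ?_⟩
  set f := {y | 1 < F y}.indicator F
  have hq0 : ∀ y, 0 < q y := fun y => zero_lt_one.trans_le (hq1 y)
  have hf1 : ∀ y, f y = 0 ∨ 1 ≤ f y := fun y => by
    rcases lt_or_ge 1 (F y) with hy | hy
    · exact .inr (hy.le.trans_eq (indicator_of_mem (s := {y | 1 < F y}) hy F).symm)
    · exact .inl (indicator_of_notMem (s := {y | 1 < F y}) hy.not_gt F)
  have hf : Measurable f := hF.indicator (measurableSet_lt measurable_const hF)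
  have hf_le : ∫⁻ y, f y ^ q y ∂μ ≤ 1 :=
    (lintegral_mono (indicator_one_lt_rpow_le hq0 hσ)).trans hfin
  refine maxFn_rpow_le_of_forall (hq0 x) fun k =>
    (hc f hf hf1 hf_le x _ (by positivity)).trans ?_
  gcongr
  exact (laverage_closedBall_le_maxFn μ _ x k).trans (maxFn_mono (fun y =>
    ENNReal.rpow_le_rpow (indicator_le_self _ F y) (hq0 y).le) x)

/- `F` is split at height `1`. The part above `1` is handled by the local condition and the part
below `1` by the decay condition. -/
theorem exists_maxFn_rpow_le {q : E → ℝ} {Q C C' m : ℝ} (hq1 : ∀ x, 1 ≤ q x) (hqQ : ∀ x, q x ≤ Q)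
    (hC : 0 ≤ C) (hlog : LocLogHolderWith C fun x => 1 / q x) (hm : 1 ≤ m) (hmQ : m ≤ Q)
    (hinf : LogHolderDecayWith C' (1 / m) fun x => 1 / q x) {σ : ℝ} (hσ : 1 ≤ σ) :
    ∃ K ≠ ∞, ∀ F : E → ℝ≥0∞, Measurable F → ∫⁻ y, (F y ^ q y) ^ σ ∂μ ≤ 1 → ∀ x,
      maxFn μ F x ^ q x ≤
        K * (maxFn μ (fun y => F y ^ q y + tailWeight y) x + tailWeight x) := by
  obtain ⟨K₁, hK₁, hlarge⟩ := exists_maxFn_indicator_one_lt_rpow_le μ hq1 hqQ hC hlog hσ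
  set K₂ := ENNReal.ofReal (Real.exp ((Module.finrank ℝ E + 1) * (Q * Q * C'))) with hK₂
  refine ⟨2 ^ (Q - 1) * (K₁ + (K₂ * K₂ + K₂)), by finiteness, fun F hF hfin x => ?_⟩
  have hms : MeasurableSet {y | 1 < F y} := measurableSet_lt measurable_const hF
  set f₁ := {y | 1 < F y}.indicator F
  set f₂ := {y | 1 < F y}ᶜ.indicator F
  set G : E → ℝ≥0∞ := fun y => F y ^ q y + tailWeight y
  have hq0 : ∀ y, 0 < q y := fun y => zero_lt_one.trans_le (hq1 y)
  have hlarge_le : maxFn μ f₁ x ^ q x ≤ K₁ * maxFn μ G x :=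
    (hlarge F hF hfin x).trans (mul_le_mul_right (maxFn_mono (fun _ => le_self_add) x) _)
  have hsmall_le : maxFn μ f₂ x ^ q x ≤ K₂ * (K₂ * maxFn μ G x + tailWeight x) := by
    have hf₂1 : ∀ y, f₂ y ≤ 1 := indicator_le' (fun y hy => not_lt.1 hy) fun _ _ => zero_le_one
    refine (maxFn_rpow_le_of_le_one (hF.indicator hms.compl) hf₂1 hq1 hm
      (fun y => hinf.abs_sub_mul_log_le hm hmQ (hq1 y) (hqQ y)) hK₂ x).trans ?_
    gcongr
    refine maxFn_mono (fun y => ?_) x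
    exact add_le_add_left (ENNReal.rpow_le_rpow (indicator_le_self _ F y) (hq0 y).le) _
  calc maxFn μ F x ^ q x ≤ (maxFn μ f₁ x + maxFn μ f₂ x) ^ q x := by
        gcongr
        · exact (hq0 x).le
        · rw [← indicator_self_add_compl {y | 1 < F y} F]
          exact maxFn_add_le (hF.indicator hms) f₂ x
    _ ≤ 2 ^ (q x - 1) * (maxFn μ f₁ x ^ q x + maxFn μ f₂ x ^ q x) :=
        ENNReal.rpow_add_le_mul_rpow_add_rpow _ _ (hq1 x)
    _ ≤ 2 ^ (Q - 1) * (K₁ * maxFn μ G x + K₂ * (K₂ * maxFn μ G x + tailWeight x)) := by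
        gcongr
        · exact one_le_two
        · exact hqQ x
    _ = 2 ^ (Q - 1) * ((K₁ + K₂ * K₂) * maxFn μ G x + K₂ * tailWeight x) := by ring
    _ ≤ 2 ^ (Q - 1) * ((K₁ + (K₂ * K₂ + K₂)) * maxFn μ G x +
          (K₁ + (K₂ * K₂ + K₂)) * tailWeight x) := by
        gcongr
        · exact le_self_add
        · exact le_add_self.trans le_add_self
    _ = _ := by ring

theorem exists_lintegral_maxFn_rpow_mul_le [Nontrivial E] {q : E → ℝ} {Q C C' m : ℝ}
    (hq1 : ∀ x, 1 ≤ q x) (hqQ : ∀ x, q x ≤ Q) (hC : 0 ≤ C)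
    (hlog : LocLogHolderWith C fun x => 1 / q x) (hm : 1 ≤ m) (hmQ : m ≤ Q)
    (hinf : LogHolderDecayWith C' (1 / m) fun x => 1 / q x) {σ : ℝ} (hσ : 1 < σ) :
    ∃ K ≠ ∞, ∀ F : E → ℝ≥0∞, Measurable F → ∫⁻ y, F y ^ (q y * σ) ∂μ ≤ 1 →
      ∫⁻ x, maxFn μ F x ^ (q x * σ) ∂μ ≤ K := by
  obtain ⟨K, hK, hpt⟩ := exists_maxFn_rpow_le μ hq1 hqQ hC hlog hm hmQ hinf hσ.le
  obtain ⟨K', hK', hmax⟩ := exists_lintegral_maxFn_rpow_le μ hσ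
  set T := ∫⁻ x, tailWeight x ^ σ ∂μ
  have hT : T ≠ ∞ := lintegral_tailWeight_rpow_ne_top μ hσ.le
  have hσ1 : 0 ≤ σ - 1 := by linarith
  refine ⟨K ^ σ * (2 ^ (σ - 1) * (K' * (2 ^ (σ - 1) * (1 + T)) + T)), by finiteness,
    fun F hF hfin => ?_⟩
  simp only [ENNReal.rpow_mul] at hfin ⊢
  set G : E → ℝ≥0∞ := fun y => F y ^ q y + tailWeight y
  have hq : Measurable q :=
    (hlog.continuous_of_one_div fun x => zero_lt_one.trans_le (hq1 x)).measurable
  calc ∫⁻ x, (maxFn μ F x ^ q x) ^ σ ∂μ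
      ≤ ∫⁻ x, (K * (maxFn μ G x + tailWeight x)) ^ σ ∂μ := by
        gcongr with x
        exact hpt F hF hfin x
    _ = K ^ σ * ∫⁻ x, (maxFn μ G x + tailWeight x) ^ σ ∂μ := by
        simp only [ENNReal.mul_rpow_of_nonneg _ _ (zero_le_one.trans hσ.le)]
        exact lintegral_const_mul' _ _ (by finiteness)
    _ ≤ K ^ σ * (2 ^ (σ - 1) * (∫⁻ x, maxFn μ G x ^ σ ∂μ + T)) := by
        gcongr
        exact lintegral_add_rpow_le _ measurable_tailWeight hσ.le
    _ ≤ K ^ σ * (2 ^ (σ - 1) * (K' * ∫⁻ x, G x ^ σ ∂μ + T)) := by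
        gcongr
        exact hmax G ((hF.pow hq).add measurable_tailWeight)
    _ ≤ K ^ σ * (2 ^ (σ - 1) * (K' * (2 ^ (σ - 1) * (1 + T)) + T)) := by
        gcongr
        exact (lintegral_add_rpow_le _ measurable_tailWeight hσ.le).trans (by gcongr)

theorem exists_lintegral_maxFn_rpow_le_of_logHolder [Nontrivial E] {p : E → ℝ} {p₀ P C C' l : ℝ}
    (hp₀ : 1 < p₀) (hp : ∀ x, p₀ ≤ p x) (hpP : ∀ x, p x ≤ P) (hC : 0 ≤ C)
    (hlog : LocLogHolderWith C fun x => 1 / p x)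
    (hinf : LogHolderDecayWith C' l fun x => 1 / p x) :
    ∃ K ≠ ∞, ∀ F : E → ℝ≥0∞, Measurable F → ∫⁻ y, F y ^ p y ∂μ ≤ 1 →
      ∫⁻ x, maxFn μ F x ^ p x ∂μ ≤ K := by
  have h0 : 0 < p₀ := by linarith
  have hp0 : ∀ x, 0 < p x := fun x => h0.trans_le (hp x)
  have hP : 0 < P := (hp0 0).trans_le (hpP 0)
  have := NormedSpace.noncompactSpace ℝ E
  have hl : 1 / P ≤ l := ge_of_tendsto' hinf.tendsto fun x =>
    one_div_le_one_div_of_le (hp0 x) (hpP x)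
  have hl' : l ≤ 1 / p₀ := le_of_tendsto' hinf.tendsto fun x => one_div_le_one_div_of_le h0 (hp x)
  have hl0 : 0 < l := (one_div_pos.2 hP).trans_le hl
  have hm : 1 ≤ 1 / (p₀ * l) := by
    rw [one_le_div (by positivity)]
    exact (le_div_iff₀' h0).1 hl'
  have hmP : 1 / (p₀ * l) ≤ P / p₀ := by
    rw [div_le_div_iff₀ (by positivity) h0]
    nlinarith [(div_le_iff₀' hP).1 hl]
  simpa only [div_mul_cancel₀ _ h0.ne'] using exists_lintegral_maxFn_rpow_mul_le μ
    (q := fun x => p x / p₀) (fun x => (one_le_div h0).2 (hp x))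
    (fun x => div_le_div_of_nonneg_right (hpP x) h0.le) (mul_nonneg h0.le hC)
    (hlog.one_div_div h0.le) hm hmP ((one_div_one_div (p₀ * l)).symm ▸ hinf.one_div_div h0.le) hp₀

end VariableExponent

/-! ### Hedberg's inequality -/

section RadialIntegrals

lemma setLIntegral_Ioc_rpow_sub_one {γ R : ℝ} (hγ : 0 < γ) (hR : 0 ≤ R) :
    ∫⁻ ρ in Ioc 0 R, ENNReal.ofReal (ρ ^ (γ - 1)) = ENNReal.ofReal (R ^ γ / γ) := by
  rw [← ofReal_integral_eq_lintegral_ofReal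
      (intervalIntegral.intervalIntegrable_rpow' (by linarith)).1,
    ← intervalIntegral.integral_of_le hR, integral_rpow (Or.inl (by linarith)), sub_add_cancel,
    Real.zero_rpow hγ.ne', sub_zero]
  filter_upwards [ae_restrict_mem measurableSet_Ioc] with t ht using Real.rpow_nonneg ht.1.le _

lemma setLIntegral_Ioi_rpow_neg_sub_one {κ R : ℝ} (hκ : 0 < κ) (hR : 0 < R) :
    ∫⁻ ρ in Ioi R, ENNReal.ofReal (ρ ^ (-κ - 1)) = ENNReal.ofReal (R ^ (-κ) / κ) := by
  rw [← ofReal_integral_eq_lintegral_ofReal (integrableOn_Ioi_rpow_of_lt (by linarith) hR),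
    integral_Ioi_rpow_of_lt (by linarith) hR, sub_add_cancel, neg_div_neg_eq]
  filter_upwards [ae_restrict_mem measurableSet_Ioi] with t ht
    using Real.rpow_nonneg (hR.trans ht).le _

lemma le_mul_rpow_of_forall_le_mul_add {J K m : ℝ≥0∞} {γ κ : ℝ} (hγ : 0 < γ) (hκ : 0 < κ)
    (hK : K ≠ ∞)
    (h : ∀ R : ℝ, 0 < R → J ≤ K * (m * ENNReal.ofReal (R ^ γ) + ENNReal.ofReal (R ^ (-κ)))) :
    J ≤ 2 * K * m ^ (κ / (γ + κ)) := by
  have he : 0 < κ / (γ + κ) := by positivity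
  rcases eq_or_ne m ∞ with rfl | hmt
  · have h1 : J ≤ K * ∞ := by simpa using h 1 one_pos
    rw [ENNReal.top_rpow_of_pos he, mul_assoc]
    exact h1.trans (le_mul_of_one_le_left' one_le_two)
  rcases eq_or_ne m 0 with rfl | hm0
  · have hlim : Tendsto (fun R : ℝ => K * ENNReal.ofReal (R ^ (-κ))) atTop (𝓝 0) := by
      simpa using ENNReal.Tendsto.const_mul
        (ENNReal.tendsto_ofReal (tendsto_rpow_neg_atTop hκ)) (Or.inr hK)
    refine (ge_of_tendsto hlim ?_).trans zero_le
    filter_upwards [eventually_gt_atTop 0] with R hR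
    simpa only [zero_mul, zero_add] using h R hR
  obtain ⟨r, hr, rfl⟩ : ∃ r : ℝ, 0 < r ∧ m = ENNReal.ofReal r :=
    ⟨m.toReal, ENNReal.toReal_pos hm0 hmt, (ENNReal.ofReal_toReal hmt).symm⟩
  have hnear : r * (r ^ (-(1 / (γ + κ)))) ^ γ = r ^ (κ / (γ + κ)) := by
    rw [← Real.rpow_mul hr.le]
    nth_rw 1 [← Real.rpow_one r]
    rw [← Real.rpow_add hr]
    congr 1
    field_simp
    ring
  have hfar : (r ^ (-(1 / (γ + κ)))) ^ (-κ) = r ^ (κ / (γ + κ)) := by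
    rw [← Real.rpow_mul hr.le]
    congr 1
    ring
  refine (h (r ^ (-(1 / (γ + κ)))) (by positivity)).trans_eq ?_
  rw [← ENNReal.ofReal_mul hr.le, hnear, hfar, ENNReal.ofReal_rpow_of_pos hr]
  ring

end RadialIntegrals

section Hedberg

open Metric

variable {E : Type*} [NormedAddCommGroup E] [NormedSpace ℝ E]

lemma rieszKer_eq_lintegral {γ : ℝ} (hγ : γ < Module.finrank ℝ E) {z : E} (hz : z ≠ 0) :
    rieszKer γ z = ENNReal.ofReal (Module.finrank ℝ E - γ) *
      ∫⁻ ρ in Ioi ‖z‖, ENNReal.ofReal (ρ ^ (γ - Module.finrank ℝ E - 1)) := by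
  have hz' : 0 < ‖z‖ := norm_pos_iff.2 hz
  have hκ : 0 < Module.finrank ℝ E - γ := sub_pos.2 hγ
  have h := setLIntegral_Ioi_rpow_neg_sub_one hκ hz'
  rw [neg_sub] at h
  rw [h, ← ENNReal.ofReal_mul hκ.le, mul_div_cancel₀ _ hκ.ne', rieszKer, ← ofReal_norm,
    ENNReal.ofReal_rpow_of_pos hz']

variable [FiniteDimensional ℝ E] [MeasurableSpace E] {μ : Measure E} [μ.IsAddHaarMeasure]

lemma setLIntegral_closedBall_le_of_lintegral_rpow_le {F : E → ℝ≥0∞} (hF : Measurable F) {q : ℝ}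
    (hq : 1 ≤ q) (hfin : ∫⁻ y, F y ^ q ∂μ ≤ 1) (x : E) {ρ : ℝ} (hρ : 0 < ρ) :
    ∫⁻ y in closedBall x ρ, F y ∂μ ≤ μ (closedBall x ρ) ^ (1 - 1 / q) := by
  have h0 := (measure_closedBall_pos μ x hρ).ne'
  have ht : μ (closedBall x ρ) ≠ ∞ := measure_closedBall_lt_top.ne
  have havg : ⨍⁻ y in closedBall x ρ, F y ∂μ ≤ μ (closedBall x ρ) ^ (-(1 / q)) := by
    rw [ENNReal.rpow_neg, ← ENNReal.inv_rpow, one_div, ENNReal.le_rpow_inv_iff (by linarith)]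
    refine (laverage_rpow_le hF hq).trans ?_
    rw [setLAverage_eq, div_eq_mul_inv]
    exact mul_le_of_le_one_left' ((setLIntegral_le_lintegral _ _).trans hfin)
  rw [← measure_mul_setLAverage F ht, sub_eq_add_neg, ENNReal.rpow_add _ _ h0 ht, ENNReal.rpow_one]
  gcongr

variable [BorelSpace E]

lemma rieszPotential_eq_lintegral_setLIntegral_ball [Nontrivial E] {γ : ℝ}
    (hγ : γ < Module.finrank ℝ E) {F : E → ℝ≥0∞} (hF : Measurable F) (x : E) :
    rieszPotential μ γ F x = ENNReal.ofReal (Module.finrank ℝ E - γ) *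
      ∫⁻ ρ in Ioi (0 : ℝ), ENNReal.ofReal (ρ ^ (γ - Module.finrank ℝ E - 1)) *
        ∫⁻ y in ball x ρ, F y ∂μ := by
  set w : ℝ → ℝ≥0∞ := fun ρ => ENNReal.ofReal (ρ ^ (γ - Module.finrank ℝ E - 1)) with hw
  have hwm : Measurable w := by fun_prop
  have hS : MeasurableSet {r : E × ℝ | ‖x - r.1‖ < r.2} :=
    measurableSet_lt (by fun_prop) (by fun_prop)
  set Φ := {r : E × ℝ | ‖x - r.1‖ < r.2}.indicator fun r => w r.2 * F r.1 with hΦ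
  have hm : Measurable Φ :=
    ((hwm.comp measurable_snd).mul (hF.comp measurable_fst)).indicator hS
  have hfst : ∀ y, ∫⁻ ρ in Ioi (0 : ℝ), Φ (y, ρ) = (∫⁻ ρ in Ioi ‖x - y‖, w ρ) * F y := fun y => by
    have hind : ∀ ρ, Φ (y, ρ) = (Ioi ‖x - y‖).indicator (fun ρ => w ρ * F y) ρ := fun _ => rfl
    simp only [hind]
    rw [lintegral_indicator measurableSet_Ioi, Measure.restrict_restrict measurableSet_Ioi,
      inter_eq_left.2 (Ioi_subset_Ioi (norm_nonneg _)), lintegral_mul_const _ hwm]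
  have hsnd : ∀ ρ, ∫⁻ y, Φ (y, ρ) ∂μ = w ρ * ∫⁻ y in ball x ρ, F y ∂μ := fun ρ => by
    rw [← lintegral_const_mul _ hF, ← lintegral_indicator measurableSet_ball]
    refine lintegral_congr fun y => ?_
    simp only [hΦ, indicator, mem_ofPred_eq, mem_ball', dist_eq_norm]
  calc rieszPotential μ γ F x
      = ∫⁻ y, (ENNReal.ofReal (Module.finrank ℝ E - γ) * ∫⁻ ρ in Ioi (0 : ℝ), Φ (y, ρ)) ∂μ := by
        refine lintegral_congr_ae ?_
        filter_upwards [compl_mem_ae_iff.2 (measure_singleton x)] with y hy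
        rw [rieszKer_eq_lintegral hγ (sub_ne_zero.2 (Ne.symm hy)), hfst, mul_assoc]
    _ = ENNReal.ofReal (Module.finrank ℝ E - γ) * ∫⁻ y, (∫⁻ ρ in Ioi (0 : ℝ), Φ (y, ρ)) ∂μ :=
        lintegral_const_mul' _ _ ENNReal.ofReal_ne_top
    _ = ENNReal.ofReal (Module.finrank ℝ E - γ) * ∫⁻ ρ in Ioi (0 : ℝ), ∫⁻ y, Φ (y, ρ) ∂μ := by
        rw [lintegral_lintegral_swap (f := fun y ρ => Φ (y, ρ)) hm.aemeasurable]
    _ = _ := by simp only [hsnd, hw]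

lemma setLIntegral_Ioc_mul_setLIntegral_ball_le {γ : ℝ} (hγ : 0 < γ) (F : E → ℝ≥0∞) (x : E) {R : ℝ}
    (hR : 0 ≤ R) :
    ∫⁻ ρ in Ioc 0 R, ENNReal.ofReal (ρ ^ (γ - Module.finrank ℝ E - 1)) *
        ∫⁻ y in ball x ρ, F y ∂μ ≤
      μ (ball 0 1) * 2 ^ Module.finrank ℝ E * ENNReal.ofReal (1 / γ) *
        (maxFn μ F x * ENNReal.ofReal (R ^ γ)) := by
  set d := Module.finrank ℝ E
  have hball : ∀ ρ ∈ Ioc 0 R, ENNReal.ofReal (ρ ^ (γ - d - 1)) * ∫⁻ y in ball x ρ, F y ∂μ ≤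
      μ (ball 0 1) * 2 ^ d * maxFn μ F x * ENNReal.ofReal (ρ ^ (γ - 1)) := fun ρ hρ => by
    calc _ ≤ ENNReal.ofReal (ρ ^ (γ - d - 1)) * (μ (closedBall x (2 * ρ)) * maxFn μ F x) := by
          gcongr
          exact (lintegral_mono_set ball_subset_closedBall).trans
            (setLIntegral_closedBall_le_maxFn μ F x hρ.1)
      _ = μ (ball 0 1) * 2 ^ d * maxFn μ F x *
            (ENNReal.ofReal (ρ ^ (γ - d - 1)) * ENNReal.ofReal (ρ ^ d)) := by
          rw [Measure.addHaar_closedBall μ x (by linarith [hρ.1]), mul_pow,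
            ENNReal.ofReal_mul (by positivity), ENNReal.ofReal_pow zero_le_two,
            ENNReal.ofReal_ofNat]
          ring
      _ = _ := by
          rw [← ENNReal.ofReal_mul (Real.rpow_nonneg hρ.1.le _), ← Real.rpow_natCast ρ d,
            ← Real.rpow_add hρ.1]
          ring_nf
  calc _ ≤ ∫⁻ ρ in Ioc 0 R, μ (ball 0 1) * 2 ^ d * maxFn μ F x * ENNReal.ofReal (ρ ^ (γ - 1)) :=
        setLIntegral_mono' measurableSet_Ioc hball
    _ = _ := by
        rw [lintegral_const_mul _ (by fun_prop), setLIntegral_Ioc_rpow_sub_one hγ hR,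
          div_eq_mul_one_div (R ^ γ), ENNReal.ofReal_mul (by positivity)]
        ring

lemma setLIntegral_Ioi_mul_setLIntegral_ball_le {γ q : ℝ} (hq : 1 ≤ q)
    (hγ : γ < Module.finrank ℝ E / q) {F : E → ℝ≥0∞} (hF : Measurable F)
    (hfin : ∫⁻ y, F y ^ q ∂μ ≤ 1) (x : E) {R : ℝ} (hR : 0 < R) :
    ∫⁻ ρ in Ioi R, ENNReal.ofReal (ρ ^ (γ - Module.finrank ℝ E - 1)) *
        ∫⁻ y in ball x ρ, F y ∂μ ≤
      μ (ball 0 1) ^ (1 - 1 / q) * ENNReal.ofReal (1 / (Module.finrank ℝ E / q - γ)) *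
        ENNReal.ofReal (R ^ (-(Module.finrank ℝ E / q - γ))) := by
  set d := Module.finrank ℝ E
  have hq1 : 0 ≤ 1 - 1 / q := sub_nonneg.2 ((div_le_one (by linarith)).2 hq)
  have hball : ∀ ρ ∈ Ioi R, ENNReal.ofReal (ρ ^ (γ - d - 1)) * ∫⁻ y in ball x ρ, F y ∂μ ≤
      μ (ball 0 1) ^ (1 - 1 / q) * ENNReal.ofReal (ρ ^ (-(d / q - γ) - 1)) := fun ρ hρ => by
    have hρ0 : 0 < ρ := hR.trans hρ
    calc _ ≤ ENNReal.ofReal (ρ ^ (γ - d - 1)) * μ (closedBall x ρ) ^ (1 - 1 / q) := by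
          gcongr
          exact (lintegral_mono_set ball_subset_closedBall).trans
            (setLIntegral_closedBall_le_of_lintegral_rpow_le hF hq hfin x hρ0)
      _ = μ (ball 0 1) ^ (1 - 1 / q) *
            (ENNReal.ofReal (ρ ^ (γ - d - 1)) * ENNReal.ofReal ((ρ ^ d) ^ (1 - 1 / q))) := by
          rw [Measure.addHaar_closedBall μ x hρ0.le, ENNReal.mul_rpow_of_nonneg _ _ hq1,
            ENNReal.ofReal_rpow_of_nonneg (by positivity) hq1]
          ring
      _ = _ := by
          rw [← ENNReal.ofReal_mul (by positivity), ← Real.rpow_natCast ρ d,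
            ← Real.rpow_mul hρ0.le, ← Real.rpow_add hρ0]
          ring_nf
  calc _ ≤ ∫⁻ ρ in Ioi R, μ (ball 0 1) ^ (1 - 1 / q) * ENNReal.ofReal (ρ ^ (-(d / q - γ) - 1)) :=
        setLIntegral_mono' measurableSet_Ioi hball
    _ = _ := by
        rw [lintegral_const_mul _ (by fun_prop),
          setLIntegral_Ioi_rpow_neg_sub_one (sub_pos.2 hγ) hR,
          div_eq_mul_one_div (R ^ _), ENNReal.ofReal_mul (by positivity)]
        ring

theorem exists_rieszPotential_le_maxFn_rpow (μ : Measure E) [μ.IsAddHaarMeasure] {γ q : ℝ}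
    (hγ : 0 < γ) (hq : 1 ≤ q) (hγq : γ < Module.finrank ℝ E / q) :
    ∃ K ≠ ∞, ∀ F : E → ℝ≥0∞, Measurable F → ∫⁻ y, F y ^ q ∂μ ≤ 1 → ∀ x,
      rieszPotential μ γ F x ≤ K * maxFn μ F x ^ (1 - γ / (Module.finrank ℝ E / q)) := by
  set d := Module.finrank ℝ E
  have hq0 : 0 < q := by linarith
  have hγd : γ < d := hγq.trans_le (div_le_self d.cast_nonneg hq)
  have : Nontrivial E := Module.nontrivial_of_finrank_pos (R := ℝ) (by exact_mod_cast hγ.trans hγd)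
  set K₁ := μ (ball 0 1) * 2 ^ d * ENNReal.ofReal (1 / γ)
  set K₂ := μ (ball 0 1) ^ (1 - 1 / q) * ENNReal.ofReal (1 / (d / q - γ))
  have hμ : μ (ball 0 1) ≠ ∞ := measure_ball_lt_top.ne
  have hq1 : 0 ≤ 1 - 1 / q := sub_nonneg.2 ((div_le_one hq0).2 hq)
  have hK : ENNReal.ofReal (d - γ) * (K₁ + K₂) ≠ ∞ := by finiteness
  have he : 1 - γ / (d / q) = (d / q - γ) / (γ + (d / q - γ)) := by
    rw [add_sub_cancel, sub_div, div_self (hγ.trans hγq).ne']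
  refine ⟨2 * (ENNReal.ofReal (d - γ) * (K₁ + K₂)), by finiteness, fun F hF hfin x => ?_⟩
  rw [he]
  refine le_mul_rpow_of_forall_le_mul_add hγ (sub_pos.2 hγq) hK fun R hR => ?_
  set m := maxFn μ F x
  rw [rieszPotential_eq_lintegral_setLIntegral_ball hγd hF, ← Ioc_union_Ioi_eq_Ioi hR.le, mul_assoc]
  gcongr
  calc _ ≤ K₁ * (m * ENNReal.ofReal (R ^ γ)) + K₂ * ENNReal.ofReal (R ^ (-(d / q - γ))) :=
        (lintegral_union_le _ _ _).trans (add_le_add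
          (setLIntegral_Ioc_mul_setLIntegral_ball_le hγ F x hR.le)
          (setLIntegral_Ioi_mul_setLIntegral_ball_le hq hγq hF hfin x hR))
    _ ≤ (K₁ + K₂) * (m * ENNReal.ofReal (R ^ γ)) +
          (K₁ + K₂) * ENNReal.ofReal (R ^ (-(d / q - γ))) := by
        gcongr
        · exact le_self_add
        · exact le_add_self
    _ = _ := (mul_add _ _ _).symm

end Hedberg

/-! ### The Luxemburg norm -/

section LuxNorm

variable {Ω : Type*} [MeasurableSpace Ω] {μ : Measure Ω} {p : Ω → ℝ} {f g : Ω → ℝ≥0∞} {c : ℝ≥0∞}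

lemma luxNorm_le (hc : c ≠ 0) (h : ∫⁻ x, (f x / c) ^ p x ∂μ ≤ 1) : luxNorm μ p f ≤ c :=
  sInf_le ⟨pos_iff_ne_zero.2 hc, h⟩

lemma luxNorm_mono (hp : ∀ x, 0 ≤ p x) (hfg : ∀ x, f x ≤ g x) : luxNorm μ p f ≤ luxNorm μ p g :=
  sInf_le_sInf fun _ ⟨hl, h⟩ => ⟨hl, (lintegral_mono fun x =>
    ENNReal.rpow_le_rpow (ENNReal.div_le_div_right (hfg x) _) (hp x)).trans h⟩

lemma luxNorm_const_mul_le (hp : ∀ x, 0 < p x) (hc : c ≠ ∞) (f : Ω → ℝ≥0∞) :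
    luxNorm μ p (fun x => c * f x) ≤ c * luxNorm μ p f := by
  rcases eq_or_ne c 0 with rfl | hc₀
  · simp only [zero_mul]
    refine le_of_forall_gt_imp_ge_of_dense fun l hl => luxNorm_le hl.ne' ?_
    simp [ENNReal.zero_rpow_of_pos (hp _)]
  · rw [mul_comm c, ← ENNReal.div_le_iff hc₀ hc]
    refine le_sInf fun l ⟨hl, h⟩ => ?_
    rw [ENNReal.div_le_iff hc₀ hc, mul_comm]
    refine luxNorm_le (mul_ne_zero hc₀ hl.ne') ?_
    simpa only [ENNReal.mul_div_mul_left _ _ hc₀ hc] using h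

lemma lintegral_div_rpow_le_one_of_luxNorm_lt (hp : ∀ x, 0 ≤ p x) (h : luxNorm μ p f < c) :
    ∫⁻ x, (f x / c) ^ p x ∂μ ≤ 1 := by
  obtain ⟨l, ⟨-, hl⟩, hlc⟩ := sInf_lt_iff.1 h
  refine (lintegral_mono fun x => ?_).trans hl
  exact ENNReal.rpow_le_rpow (ENNReal.div_le_div_left hlc.le _) (hp x)

lemma luxNorm_le_one_add_of_lintegral_rpow_le (hp : ∀ x, 1 ≤ p x) (hc : c ≠ ∞)
    (h : ∫⁻ x, f x ^ p x ∂μ ≤ c) : luxNorm μ p f ≤ 1 + c := by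
  refine luxNorm_le (by simp) ?_
  calc ∫⁻ x, (f x / (1 + c)) ^ p x ∂μ ≤ ∫⁻ x, (1 + c)⁻¹ * f x ^ p x ∂μ := by
        refine lintegral_mono fun x => ?_
        rw [div_eq_mul_inv, mul_comm, ENNReal.mul_rpow_of_nonneg _ _ (by linarith [hp x])]
        gcongr
        exact ENNReal.rpow_le_self_of_le_one (ENNReal.inv_le_one.2 le_self_add) (hp x)
    _ = (1 + c)⁻¹ * ∫⁻ x, f x ^ p x ∂μ := lintegral_const_mul' _ _ (by simp)
    _ ≤ (1 + c)⁻¹ * (1 + c) := by gcongr; exact h.trans le_add_self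
    _ = 1 := ENNReal.inv_mul_cancel (by simp) (by finiteness)

/-- The norm of `𝓛^{p(·)}_r = L^{p(·)} ∩ L^r` on `ℝ≥0∞`-valued functions. -/
def mixedLuxNorm (μ : Measure Ω) (p : Ω → ℝ) (r : ℝ) (f : Ω → ℝ≥0∞) : ℝ≥0∞ :=
  max (luxNorm μ p f) (luxNorm μ (fun _ => r) f)

variable {r : ℝ}

lemma mixedLuxNorm_mono (hp : ∀ x, 0 ≤ p x) (hr : 0 ≤ r) (hfg : ∀ x, f x ≤ g x) :
    mixedLuxNorm μ p r f ≤ mixedLuxNorm μ p r g :=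
  max_le_max (luxNorm_mono hp hfg) (luxNorm_mono (fun _ => hr) hfg)

lemma mixedLuxNorm_const_mul_le (hp : ∀ x, 0 < p x) (hr : 0 < r) (hc : c ≠ ∞) (f : Ω → ℝ≥0∞) :
    mixedLuxNorm μ p r (fun x => c * f x) ≤ c * mixedLuxNorm μ p r f :=
  max_le
    ((luxNorm_const_mul_le hp hc f).trans (mul_le_mul_right (le_max_left _ _) c))
    ((luxNorm_const_mul_le (fun _ => hr) hc f).trans (mul_le_mul_right (le_max_right _ _) c))

end LuxNorm

/-! ### Riesz potentials of powers -/

section RieszPower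

lemma le_mul_rpow_of_forall_gt {a N K : ℝ≥0∞} {β : ℝ} (hβ : 0 < β) (hK₀ : K ≠ 0) (hK : K ≠ ∞)
    (h : ∀ l, N < l → l ≠ ∞ → a ≤ K * l ^ β) : a ≤ K * N ^ β := by
  rcases eq_or_ne N ∞ with rfl | hN
  · rw [ENNReal.top_rpow_of_pos hβ, ENNReal.mul_top hK₀]
    exact le_top
  have hlt : N < ∞ := lt_top_iff_ne_top.2 hN
  have hlim : Tendsto (fun l : ℝ≥0∞ => K * l ^ β) (𝓝[>] N) (𝓝 (K * N ^ β)) :=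
    ((ENNReal.continuous_const_mul hK).comp ENNReal.continuous_rpow_const).continuousWithinAt
  have : (𝓝[>] N).NeBot := nhdsGT_neBot_of_exists_gt ⟨∞, hlt⟩
  refine ge_of_tendsto hlim ?_
  filter_upwards [Ioo_mem_nhdsGT hlt] with l hl using h l hl.1 hl.2.ne

variable {E : Type*} [NormedAddCommGroup E] [NormedSpace ℝ E]

lemma rieszPotential_const_mul [MeasurableSpace E] (μ : Measure E) (γ : ℝ) {c : ℝ≥0∞} (hc : c ≠ ∞)
    (f : E → ℝ≥0∞) (x : E) :
    rieszPotential μ γ (fun y => c * f y) x = c * rieszPotential μ γ f x := by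
  simp only [rieszPotential, mul_left_comm _ c]
  exact lintegral_const_mul' _ _ hc

lemma rieszPotential_rpow_eq_const_mul [MeasurableSpace E] (μ : Measure E) (γ : ℝ) {β : ℝ}
    (hβ : 0 ≤ β) {c : ℝ≥0∞} (hc₀ : c ≠ 0) (hc : c ≠ ∞) (w : E → ℝ≥0∞) (x : E) :
    rieszPotential μ γ (fun y => w y ^ β) x =
      c ^ β * rieszPotential μ γ (fun y => (w y / c) ^ β) x := by
  rw [← rieszPotential_const_mul μ γ (ENNReal.rpow_ne_top_of_nonneg hβ hc)]
  simp only [← ENNReal.mul_rpow_of_nonneg _ _ hβ, ENNReal.mul_div_cancel hc₀ hc]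

variable [FiniteDimensional ℝ E] [MeasurableSpace E] [BorelSpace E] (μ : Measure E)
  [μ.IsAddHaarMeasure] {β γ p₀ P C C' l : ℝ} {p : E → ℝ}

lemma exists_luxNorm_rieszPotential_rpow_le (hβ : 1 < β) (hγ : 0 < γ)
    (hγβ : γ * β < Module.finrank ℝ E * (β - 1)) (hp₀ : β < p₀) (hp : ∀ x, p₀ ≤ p x)
    (hpP : ∀ x, p x ≤ P) (hC : 0 ≤ C) (hlog : LocLogHolderWith C fun x => 1 / p x)
    (hinf : LogHolderDecayWith C' l fun x => 1 / p x) :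
    ∃ K ≠ ∞, ∀ w : E → ℝ≥0∞, Measurable w → ∫⁻ x, w x ^ p x ∂μ ≤ 1 →
      ∫⁻ x, w x ^ (Module.finrank ℝ E * (β - 1) / γ) ∂μ ≤ 1 →
        luxNorm μ p (rieszPotential μ γ fun y => w y ^ β) ≤ K := by
  have hβ0 : 0 < β := by linarith
  have hβ1 : 0 < β - 1 := by linarith
  have hd : (0 : ℝ) < Module.finrank ℝ E :=
    pos_of_mul_pos_left ((by positivity : 0 < γ * β).trans hγβ) hβ1.le
  have : Nontrivial E := Module.nontrivial_of_finrank_pos (R := ℝ) (by exact_mod_cast hd)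
  set q := Module.finrank ℝ E * (β - 1) / γ / β with hq
  have hq1 : 1 ≤ q := by rw [hq, div_div, one_le_div (by positivity)]; exact hγβ.le
  have hγq : γ / (Module.finrank ℝ E / q) = 1 - 1 / β := by rw [hq]; field_simp
  have hγlt : γ < Module.finrank ℝ E / q := by
    rw [← div_lt_one (by positivity), hγq]
    linarith [one_div_pos.2 hβ0]
  obtain ⟨K, hK, hriesz⟩ := exists_rieszPotential_le_maxFn_rpow μ hγ hq1 hγlt
  obtain ⟨K', hK', hmax⟩ := exists_lintegral_maxFn_rpow_le_of_logHolder μ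
    ((one_lt_div hβ0).2 hp₀) (fun x => div_le_div_of_nonneg_right (hp x) hβ0.le)
    (fun x => div_le_div_of_nonneg_right (hpP x) hβ0.le) (mul_nonneg hβ0.le hC)
    (hlog.one_div_div hβ0.le) (hinf.one_div_div hβ0.le)
  refine ⟨K * (1 + K'), by finiteness, fun w hw hwp hwr => ?_⟩
  have hpow : ∀ x s, (w x ^ β) ^ (s / β) = w x ^ s := fun x s => by
    rw [← ENNReal.rpow_mul, mul_div_cancel₀ _ hβ0.ne']
  have hM : ∫⁻ x, (maxFn μ (fun y => w y ^ β) x ^ (1 / β)) ^ p x ∂μ ≤ K' := by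
    simpa only [← ENNReal.rpow_mul, one_div_mul_eq_div] using
      hmax _ (hw.pow_const β) (by simpa only [hpow] using hwp)
  have hpos : ∀ x, 1 < p x := fun x => by linarith [hp x]
  calc luxNorm μ p (rieszPotential μ γ fun y => w y ^ β)
      ≤ luxNorm μ p fun x => K * maxFn μ (fun y => w y ^ β) x ^ (1 / β) := by
        refine luxNorm_mono (fun x => by linarith [hpos x]) fun x => ?_
        simpa only [hγq, sub_sub_cancel] using
          hriesz _ (hw.pow_const β) (by simpa only [hq, hpow] using hwr) x
    _ ≤ K * luxNorm μ p fun x => maxFn μ (fun y => w y ^ β) x ^ (1 / β) :=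
        luxNorm_const_mul_le (fun x => by linarith [hpos x]) hK _
    _ ≤ K * (1 + K') := by
        gcongr
        exact luxNorm_le_one_add_of_lintegral_rpow_le (fun x => (hpos x).le) hK' hM

theorem exists_mixedLuxNorm_rieszPotential_rpow_le (hβ : 1 < β) (hγ : 0 < γ)
    (hγβ : γ * β < Module.finrank ℝ E * (β - 1)) (hp₀ : β < p₀) (hp : ∀ x, p₀ ≤ p x)
    (hpP : ∀ x, p x ≤ P) (hC : 0 ≤ C) (hlog : LocLogHolderWith C fun x => 1 / p x)
    (hinf : LogHolderDecayWith C' l fun x => 1 / p x) :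
    ∃ K > 0, ∀ w : E → ℝ≥0∞, Measurable w →
      mixedLuxNorm μ p (Module.finrank ℝ E * (β - 1) / γ) (rieszPotential μ γ fun y => w y ^ β) ≤
        ENNReal.ofReal K * mixedLuxNorm μ p (Module.finrank ℝ E * (β - 1) / γ) w ^ β := by
  set r := Module.finrank ℝ E * (β - 1) / γ with hr
  have hβr : β < r := by rwa [hr, lt_div_iff₀ hγ, mul_comm]
  have hp_pos : ∀ x, 0 < p x := fun x => by linarith [hp x]
  have hr_pos : 0 < r := by linarith
  obtain ⟨K₁, hK₁, hvar⟩ :=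
    exists_luxNorm_rieszPotential_rpow_le μ hβ hγ hγβ hp₀ hp hpP hC hlog hinf
  obtain ⟨K₂, hK₂, hconst⟩ :=
    exists_luxNorm_rieszPotential_rpow_le μ (p := fun _ => r) (C := 0) (C' := 0) (l := 1 / r) hβ hγ
      hγβ hβr (fun _ => le_rfl) (fun _ => le_rfl) le_rfl
      (fun x y _ => by simp) (fun x => by simp)
  set K := 1 + max K₁ K₂ with hK_def
  have hK : K ≠ ∞ := by finiteness
  refine ⟨K.toReal, ENNReal.toReal_pos (by simp [hK_def]) hK, fun w hw => ?_⟩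
  rw [ENNReal.ofReal_toReal hK]
  refine le_mul_rpow_of_forall_gt (by linarith) (by simp [hK_def]) hK fun L hL hLt => ?_
  have hL0 : L ≠ 0 := (zero_le.trans_lt hL).ne'
  have hunit : mixedLuxNorm μ p r (rieszPotential μ γ fun y => (w y / L) ^ β) ≤ K := by
    have h₁ := lintegral_div_rpow_le_one_of_luxNorm_lt (fun x => (hp_pos x).le) (max_lt_iff.1 hL).1
    have h₂ := lintegral_div_rpow_le_one_of_luxNorm_lt (fun _ => hr_pos.le) (max_lt_iff.1 hL).2
    exact (max_le_max (hvar _ (hw.div_const L) h₁ h₂) (hconst _ (hw.div_const L) h₂ h₂)).trans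
      le_add_self
  have hLβ : L ^ β ≠ ∞ := ENNReal.rpow_ne_top_of_nonneg (by linarith) hLt
  calc mixedLuxNorm μ p r (rieszPotential μ γ fun y => w y ^ β)
      = mixedLuxNorm μ p r fun x => L ^ β * rieszPotential μ γ (fun y => (w y / L) ^ β) x := by
        congr 1
        exact funext (rieszPotential_rpow_eq_const_mul μ γ (by linarith) hL0 hLt w)
    _ ≤ L ^ β * mixedLuxNorm μ p r (rieszPotential μ γ fun y => (w y / L) ^ β) :=
        mixedLuxNorm_const_mul_le hp_pos hr_pos hLβ _
    _ ≤ K * L ^ β := by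
        rw [mul_comm K]
        gcongr

end RieszPower

/-! ### The nonlinear estimate -/

lemma measurable_essSup_prod {X Y : Type*} [MeasurableSpace X] [MeasurableSpace Y] {ν : Measure Y}
    [SFinite ν] {f : X × Y → ℝ≥0∞} (hf : Measurable f) :
    Measurable fun x => essSup (fun y => f (x, y)) ν := by
  refine measurable_of_Iic fun a => ?_
  have hS : MeasurableSet {z | a < f z} := measurableSet_lt measurable_const hf
  have hpre : (fun x => essSup (fun y => f (x, y)) ν) ⁻¹' Iic a =
      (fun x => ν (Prod.mk x ⁻¹' {z | a < f z})) ⁻¹' {0} := by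
    ext x
    have hae : ν (Prod.mk x ⁻¹' {z | a < f z}) = 0 ↔ ∀ᵐ y ∂ν, f (x, y) ≤ a := by
      simp only [ae_iff, not_le]
      rfl
    simp only [mem_preimage, mem_Iic, mem_singleton_iff, hae]
    exact ⟨fun h => (ENNReal.ae_le_essSup _).mono fun y hy => hy.trans h, essSup_le_of_ae_le a⟩
  rw [hpre]
  exact measurable_measure_prodMk_left hS (measurableSet_singleton 0)

lemma le_of_ae_le_of_continuous {X : Type*} [TopologicalSpace X] [MeasurableSpace X] {μ : Measure X}
    [μ.IsOpenPosMeasure] {f g : X → ℝ} (hf : Continuous f) (hg : Continuous g)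
    (h : ∀ᵐ x ∂μ, f x ≤ g x) (x : X) : f x ≤ g x :=
  (isClosed_le hf hg).closure_subset (Measure.dense_of_ae h x)

variable {n b : ℕ} {α : ℝ}

lemma measurable_timeSup {u : ℝ → Rn n → ℝ} (hu : Measurable (Function.uncurry u)) :
    Measurable (timeSup n u) :=
  measurable_essSup_prod (f := fun z : Rn n × ℝ => ENNReal.ofReal |u z.2 z.1|)
    (hu.comp measurable_swap).abs.ennreal_ofReal

/-- The nonlinear term of Duhamel's formula for the fractional heat equation with nonlinearity
`|u|^b u`. -/
def duhamelTerm (n b : ℕ) (α : ℝ) (u : ℝ → Rn n → ℝ) (t : ℝ) (x : Rn n) : ℝ :=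
  ∑ j : Fin n, ∫ s in Ioc (0 : ℝ) t,
    conv n (dKer n α (t - s) j) (fun y => |u s y| ^ b * u s y) x

lemma exists_timeSup_duhamelTerm_le_rieszPotential [Nontrivial (Rn n)] (b : ℕ) (hα0 : 0 < α)
    (hα1 : α ≤ 1) (hαn : 2 * α - 1 < n) :
    ∃ A > 0, ∀ u : ℝ → Rn n → ℝ, Measurable (Function.uncurry u) → ∀ x,
      timeSup n (duhamelTerm n b α u) x ≤ ENNReal.ofReal A *
        rieszPotential volume (2 * α - 1) (fun y => timeSup n u y ^ (b + 1 : ℝ)) x := by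
  obtain ⟨A, hA, hduhamel⟩ := exists_enorm_duhamel_le_rieszPotential hα0 hα1 hαn
  refine ⟨A, hA, fun u hu x => essSup_le_of_ae_le _ (Eventually.of_forall fun t => ?_)⟩
  dsimp only
  rw [← Real.enorm_eq_ofReal_abs]
  refine hduhamel (fun s y => |u s y| ^ b * u s y) _ ((hu.abs.pow_const b).mul hu) (fun y => ?_) t x
  filter_upwards [ENNReal.ae_le_essSup fun s => ENNReal.ofReal |u s y|] with s hs
  rw [enorm_mul, enorm_pow, Real.enorm_abs, ← pow_succ, Real.enorm_eq_ofReal_abs]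
  exact_mod_cast pow_le_pow_left₀ zero_le hs (b + 1)

theorem exists_mixedN_duhamelTerm_le (hα0 : 1 / 2 < α) (hα1 : α ≤ 1)
    (hnb : (2 * α - 1) * (b + 1) < n * b) {p : Rn n → ℝ} {p₀ P C C' l : ℝ} (hp₀ : b + 1 < p₀)
    (hp : ∀ x, p₀ ≤ p x) (hpP : ∀ x, p x ≤ P) (hC : 0 ≤ C)
    (hlog : LocLogHolderWith C fun x => 1 / p x)
    (hinf : LogHolderDecayWith C' l fun x => 1 / p x) :
    ∃ K > 0, ∀ u : ℝ → Rn n → ℝ, Measurable (Function.uncurry u) →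
      mixedN n p (n * b / (2 * α - 1)) (duhamelTerm n b α u) ≤
        ENNReal.ofReal K * mixedN n p (n * b / (2 * α - 1)) u ^ (b + 1) := by
  have hγ : 0 < 2 * α - 1 := by linarith
  have hb : (0 : ℝ) < b :=
    pos_of_mul_pos_right ((by positivity : 0 < (2 * α - 1) * (b + 1)).trans hnb) n.cast_nonneg
  have hαn : 2 * α - 1 < n := lt_of_mul_lt_mul_right (a := (b : ℝ)) (by linarith) hb.le
  have hn : (0 : ℝ) < n := hγ.trans hαn
  have : Nontrivial (Rn n) := Module.nontrivial_of_finrank_pos (R := ℝ) (by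
    rw [finrank_euclideanSpace_fin]
    exact_mod_cast hn)
  obtain ⟨A, hA, hduhamel⟩ :=
    exists_timeSup_duhamelTerm_le_rieszPotential b (by linarith) hα1 hαn
  obtain ⟨K, hK, hriesz⟩ := exists_mixedLuxNorm_rieszPotential_rpow_le (volume : Measure (Rn n))
    (β := b + 1) (by linarith) hγ (by simpa using hnb) hp₀ hp hpP hC hlog hinf
  rw [finrank_euclideanSpace_fin, add_sub_cancel_right] at hriesz
  set r := n * b / (2 * α - 1)
  have hr_pos : 0 < r := by positivity
  have hp_pos : ∀ x, 0 < p x := fun x => by linarith [hp x]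
  refine ⟨A * K, mul_pos hA hK, fun u hu => ?_⟩
  calc mixedN n p r (duhamelTerm n b α u)
      ≤ mixedLuxNorm volume p r fun x => ENNReal.ofReal A *
          rieszPotential volume (2 * α - 1) (fun y => timeSup n u y ^ (b + 1 : ℝ)) x :=
        mixedLuxNorm_mono (fun x => (hp_pos x).le) hr_pos.le (hduhamel u hu)
    _ ≤ ENNReal.ofReal A * mixedLuxNorm volume p r
          (rieszPotential volume (2 * α - 1) fun y => timeSup n u y ^ (b + 1 : ℝ)) :=
        mixedLuxNorm_const_mul_le hp_pos hr_pos ENNReal.ofReal_ne_top _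
    _ ≤ ENNReal.ofReal A * (ENNReal.ofReal K * mixedN n p r u ^ (b + 1 : ℝ)) :=
        mul_le_mul_right (hriesz _ (measurable_timeSup hu)) _
    _ = ENNReal.ofReal (A * K) * mixedN n p r u ^ (b + 1) := by
        rw [← mul_assoc, ENNReal.ofReal_mul hA.le]
        norm_cast

theorem stmt8_general (n b : ℕ) (α : ℝ) (hα : 1 / 2 < α ∧ α ≤ 1)
    (hnb : (2 * α - 1) * ((b : ℝ) + 1) < (n : ℝ) * b)
    (p : Rn n → ℝ) (hplog : IsPLog univ p)
    (hpminus : ∃ pm : ℝ, (b : ℝ) + 1 < pm ∧ ∀ᵐ x ∂(volume : Measure (Rn n)), pm ≤ p x)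
    (hpplus : ∃ P : ℝ, ∀ᵐ x ∂(volume : Measure (Rn n)), p x ≤ P) :
    ∃ C > (0 : ℝ), ∀ u : ℝ → Rn n → ℝ, Measurable (Function.uncurry u) →
      mixedN n p ((n : ℝ) * b / (2 * α - 1))
        (fun t x => ∑ j : Fin n, ∫ s in Ioc (0 : ℝ) t,
          conv n (dKer n α (t - s) j) (fun y => |u s y| ^ b * u s y) x)
      ≤ ENNReal.ofReal C * (mixedN n p ((n : ℝ) * b / (2 * α - 1)) u) ^ (b + 1) := by
  obtain ⟨-, hp1, C₁, hC₁, C₂, -, pinf, hlog, hinf⟩ := hplog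
  obtain ⟨pm, hbpm, hpm⟩ := hpminus
  obtain ⟨P, hP⟩ := hpplus
  have hloc : LocLogHolderWith C₁ fun x => 1 / p x :=
    fun x y hxy => hlog x (mem_univ x) y (mem_univ y) hxy
  have hcont : Continuous p :=
    hloc.continuous_of_one_div fun x => one_pos.trans_le (hp1 x (mem_univ x))
  exact exists_mixedN_duhamelTerm_le hα.1 hα.2 hnb hbpm
    (le_of_ae_le_of_continuous continuous_const hcont hpm)
    (le_of_ae_le_of_continuous hcont continuous_const hP) hC₁.le hloc
    (fun x => hinf x (mem_univ x))

/-- Control of the nonlinear term (γ = 1) in mixed variable Lebesgue spaces. -/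
theorem stmt8 (n b : ℕ) (hn : 1 ≤ n) (hb : 1 ≤ b) (α : ℝ) (hα : 1/2 < α ∧ α ≤ 1)
    (h2α : 2 * α - 1 < n) (hnb : (2 * α - 1) * ((b:ℝ) + 1) < (n:ℝ) * b)
    (p : Rn n → ℝ) (hplog : IsPLog univ p)
    (hpminus : ∃ pm : ℝ, (b:ℝ) + 1 < pm ∧ ∀ᵐ x ∂(volume : Measure (Rn n)), pm ≤ p x)
    (hpplus : ∃ P : ℝ, (∀ᵐ x ∂(volume : Measure (Rn n)), p x ≤ P) ∧
      (2 * α - 1) * P < (n:ℝ) * ((b:ℝ) + 1)) :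
    ∃ C > (0:ℝ), ∀ u : ℝ → Rn n → ℝ, Measurable (Function.uncurry u) →
      mixedN n p ((n:ℝ) * b / (2 * α - 1))
        (fun t x => ∑ j : Fin n, ∫ s in Ioc (0:ℝ) t,
          conv n (dKer n α (t - s) j) (fun y => |u s y| ^ b * u s y) x)
      ≤ ENNReal.ofReal C * (mixedN n p ((n:ℝ) * b / (2 * α - 1)) u) ^ (b + 1) :=
  stmt8_general n b α hα hnb p hplog hpminus (hpplus.imp fun _ => And.left)
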